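/- Let $k$ be an algebraically closed field and let $C \subset \mathbb{P}^2_k$ be a smooth plane curve of degree $d \geq 4$. Then $C$ has at most one $g^2_d$, and it is a complete linear series: if $\mathcal{L}$ is any line bundle on $C$ of degree $d$ with $h^0(C, \mathcal{L}) \geq 3$, then $\mathcal{L} \cong \mathcal{O}_C(1)$ and $h^0(C, \mathcal{L}) = 3$. -/

import Mathlib

/-!
Framework: a smooth plane curve of degree `d` over an algebraically closed field `k` is
`C = V(f) ⊆ ℙ²_k` for `f ∈ k[X₀,X₁,X₂]` homogeneous of degree `d` whose only common zero
with its partial derivatives is the origin.  We realize the points of `C`, the order of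
vanishing at a point of `C` of a homogeneous polynomial, Riemann–Roch spaces `L(D)` of
divisors on `C` (inside the fraction field `F` of the homogeneous coordinate ring of `C`,
as the degree-zero fractions `g/h` with `div(g/h) + D ≥ 0`), and `h⁰(C, O_C(D)) = dim L(D)`.
-/

noncomputable section PlaneCurve

variable {k : Type*} [Field k]

/-- The points of the plane curve `V(f) ⊆ ℙ²_k`: points of the projectivization of `k³`
whose (fixed) representative vector is a zero of `f`.  (For homogeneous `f` this is
independent of the representative.) -/
def PlanePoint (f : MvPolynomial (Fin 3) k) : Type _ :=
  { p : Projectivization k (Fin 3 → k) // MvPolynomial.eval p.rep f = 0 }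

open Classical in
/-- The inhomogeneous polynomial `ℓ - 1`, where `ℓ` is a linear form with `ℓ(v) = 1`;
the hyperplane `ℓ = 1` is an affine chart of `ℙ²` containing the point `[v]`. -/
def slicePoly (v : Fin 3 → k) : MvPolynomial (Fin 3) k :=
  if hv : ∃ i, v i ≠ 0 then
    MvPolynomial.C (v hv.choose)⁻¹ * MvPolynomial.X hv.choose - 1
  else 0

/-- The order of vanishing, at the point `p` of the curve `C = V(f)`, of the restriction
to `C` of a homogeneous polynomial `g`: in the affine chart `ℓ = 1` of `ℙ²` containing `p`,
it is the largest `n` such that, locally at `p` (i.e., after multiplying by some polynomial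
not vanishing at `p`), `g` lies in the `n`-th power of the maximal ideal of `p` on the
affine curve `{f = 0, ℓ = 1}`. -/
def ordAt (f : MvPolynomial (Fin 3) k) (p : PlanePoint f) (g : MvPolynomial (Fin 3) k) : ℕ :=
  sSup { n : ℕ | ∃ h : MvPolynomial (Fin 3) k, MvPolynomial.eval p.1.rep h ≠ 0 ∧
    h * g ∈ Ideal.span {f, slicePoly p.1.rep} +
      (RingHom.ker (MvPolynomial.eval p.1.rep)) ^ n }

variable (F : Type*) [CommRing F]

/-- The Riemann–Roch space `L(D) = H⁰(C, O_C(D))` of a divisor `D` on the smooth plane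
curve `C = V(f)`, realized inside the fraction field `F` of the homogeneous coordinate ring
`k[X₀,X₁,X₂]/(f)` of `C`: it consists of `0` together with all degree-zero fractions `g/h`
(`g`, `h` homogeneous of the same degree, neither divisible by `f`) with `div(g/h) + D ≥ 0`. -/
def RRspace (f : MvPolynomial (Fin 3) k)
    [Algebra (MvPolynomial (Fin 3) k ⧸ Ideal.span {f}) F]
    (D : PlanePoint f → ℤ) : Set F :=
  {φ | φ = 0 ∨ ∃ (e : ℕ) (g h : MvPolynomial (Fin 3) k),
    g.IsHomogeneous e ∧ h.IsHomogeneous e ∧ ¬ f ∣ g ∧ ¬ f ∣ h ∧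
    φ * algebraMap (MvPolynomial (Fin 3) k ⧸ Ideal.span {f}) F
          (Ideal.Quotient.mk (Ideal.span {f}) h)
      = algebraMap (MvPolynomial (Fin 3) k ⧸ Ideal.span {f}) F
          (Ideal.Quotient.mk (Ideal.span {f}) g) ∧
    ∀ p : PlanePoint f, 0 ≤ (ordAt f p g : ℤ) - (ordAt f p h : ℤ) + D p}

/-- `h⁰(C, O_C(D))`: the dimension over `k` of the Riemann–Roch space of the divisor `D`. -/
def h0 (f : MvPolynomial (Fin 3) k)
    [Algebra (MvPolynomial (Fin 3) k ⧸ Ideal.span {f}) F] [Algebra k F]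
    (D : PlanePoint f → ℤ) : ℕ :=
  Module.finrank k (Submodule.span k (RRspace F f D))

end PlaneCurve

/-!
The coordinate ring of the curve is locally a discrete valuation ring generated by a line, which
gives Bézout's theorem by a dimension count, and the regular sequence `f, h` gives Max Noether's
theorem: a form passing through the divisor cut out by `h` is congruent to a multiple of `h`
modulo `f`. Hence, if `G` cuts out `A + D` on the curve, then `φ ↦ φ * G` identifies `L(D)` with
the forms through `A` modulo `f`.

Suppose that the forms through `A` modulo `f` contain a pencil, and let `G` cut out `A + E`.
Noether's theorem shows that the part of `E` outside the base locus has the Cayley–Bacharach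
property for forms of degree `d - 3`. As points impose independent conditions on forms of large
degree, this forces `deg E ≥ d - 1`, and `E` lies on a line in case of equality. In particular,
every divisor of degree `d - 2` has `ℓ ≤ 1`, so `ℓ(D) ≤ 3` when `deg D = d`. If `ℓ(D) = 3`,
choose `G` cutting out `A + P + E` with `P` not in `E`. Then `E` is collinear of degree `d - 1`,
and so is `E - P' + P` for a point `P'` of `E`. Both lines are determined by `E - P'`, so they
agree, and `P + E`, which is linearly equivalent to `D`, is the section of the curve by this
line.
-/

namespace PlaneCurve

open MvPolynomial

/-! ### Homogeneous polynomials -/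

section Homogeneous

variable {σ R : Type*} [CommRing R] {f g h p : MvPolynomial σ R} {b d e n : ℕ}

theorem aeval_mul_of_isHomogeneous {A : Type*} [CommRing A] [Algebra R A]
    (hp : p.IsHomogeneous n) (c : A) (v : σ → A) :
    aeval (fun i ↦ c * v i) p = c ^ n * aeval v p := by
  simp only [aeval_def, eval₂_eq, Finset.mul_sum, mul_pow, Finset.prod_mul_distrib]
  refine Finset.sum_congr rfl fun m hm ↦ ?_
  have hdeg : ∑ i ∈ m.support, m i = n := (hp.degree_eq_sum_deg_support hm).symm
  rw [Finset.prod_pow_eq_pow_sum, hdeg, mul_left_comm]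

attribute [local instance] MvPolynomial.gradedAlgebra in
theorem homogeneousComponent_add_mul (hg : g.IsHomogeneous e) (a : MvPolynomial σ R) (i : ℕ) :
    homogeneousComponent (i + e) (a * g) = homogeneousComponent i a * g := by
  rw [← decomposition.decompose'_apply, ← decomposition.decompose'_apply]
  exact DirectSum.coe_decompose_mul_add_of_right_mem (homogeneousSubmodule σ R) hg

attribute [local instance] MvPolynomial.gradedAlgebra in
theorem homogeneousComponent_mem_span_pair (hf : f.IsHomogeneous d) (hh : h.IsHomogeneous b)
    (hp : p ∈ Ideal.span {f, h}) (i : ℕ) : homogeneousComponent i p ∈ Ideal.span {f, h} := by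
  refine homogeneousComponent_mem_of_mem (Ideal.homogeneous_span _ _ ?_) hp i
  rintro _ (rfl | rfl)
  exacts [⟨d, hf⟩, ⟨b, hh⟩]

theorem dvd_homogeneousComponent (hf : f.IsHomogeneous d) (hp : f ∣ p) (i : ℕ) :
    f ∣ homogeneousComponent i p := by
  have := homogeneousComponent_mem_span_pair hf hf (p := p) (by simpa [Ideal.mem_span_singleton]) i
  simpa [Ideal.mem_span_singleton] using this

theorem exists_isHomogeneous_dvd_sub_mul (hf : f.IsHomogeneous d) (hh : h.IsHomogeneous b)
    (hp : p.IsHomogeneous (e + b)) (hmem : p ∈ Ideal.span {f, h}) :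
    ∃ c : MvPolynomial σ R, c.IsHomogeneous e ∧ f ∣ p - c * h := by
  obtain ⟨x, y, hxy⟩ := Ideal.mem_span_pair.1 hmem
  refine ⟨homogeneousComponent e y, homogeneousComponent_isHomogeneous e y, ?_⟩
  have hdvd : f ∣ p - y * h := ⟨x, by rw [← hxy]; ring⟩
  simpa only [map_sub, homogeneousComponent_eq_self hp, homogeneousComponent_add_mul hh]
    using dvd_homogeneousComponent hf hdvd (e + b)

theorem exists_isHomogeneous_eq_mul (hf : f.IsHomogeneous d) (hp : p.IsHomogeneous (n + d))
    (hdvd : f ∣ p) : ∃ c : MvPolynomial σ R, c.IsHomogeneous n ∧ p = c * f := by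
  obtain ⟨c, rfl⟩ := hdvd
  refine ⟨homogeneousComponent n c, homogeneousComponent_isHomogeneous n c, ?_⟩
  rw [← homogeneousComponent_add_mul hf, mul_comm c, homogeneousComponent_eq_self hp]

theorem exists_C_eq (hp : p.IsHomogeneous 0) : ∃ c : R, p = C c :=
  ⟨_, (totalDegree_eq_zero_iff_eq_C).1 (Nat.le_zero.1 hp.totalDegree_le)⟩

theorem exists_isHomogeneous_dvd_sub {l : MvPolynomial σ R} (hl : l.IsHomogeneous 1)
    (hn : p.totalDegree ≤ n) : ∃ q : MvPolynomial σ R, q.IsHomogeneous n ∧ l - 1 ∣ q - p := by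
  refine ⟨∑ i ∈ Finset.range (p.totalDegree + 1), l ^ (n - i) * homogeneousComponent i p, ?_, ?_⟩
  · refine IsHomogeneous.sum _ _ _ fun i hi ↦ ?_
    have hin : i ≤ n := by grind
    simpa only [one_mul, Nat.sub_add_cancel hin] using
      (hl.pow (n - i)).mul (homogeneousComponent_isHomogeneous i p)
  · conv => enter [2, 2]; rw [← sum_homogeneousComponent p]
    rw [← Finset.sum_sub_distrib]
    refine Finset.dvd_sum fun i _ ↦ ?_
    rw [← sub_one_mul]
    exact Dvd.dvd.mul_right (by simpa only [one_pow] using sub_dvd_pow_sub_pow l 1 (n - i)) _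

theorem sub_aeval_mem_of_X_sub_mem {I : Ideal (MvPolynomial σ R)} {q : σ → MvPolynomial σ R}
    (hq : ∀ i, X i - q i ∈ I) (a : MvPolynomial σ R) : a - aeval q a ∈ I := by
  rw [← Ideal.Quotient.mk_eq_mk_iff_sub_mem]
  have hX : (Ideal.Quotient.mkₐ R I).comp (aeval q) = Ideal.Quotient.mkₐ R I := by
    ext i
    simpa using ((Ideal.Quotient.mk_eq_mk_iff_sub_mem _ _).2 (hq i)).symm
  exact (DFunLike.congr_fun hX a).symm

end Homogeneous

section Field

variable {σ k : Type*} [Field k] {f l p q : MvPolynomial σ k} {d e n : ℕ}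

theorem not_dvd_of_isHomogeneous_of_lt (hf : f.IsHomogeneous d) (hp : p.IsHomogeneous e)
    (hp0 : p ≠ 0) (hed : e < d) : ¬ f ∣ p := by
  rintro ⟨c, rfl⟩
  have hc := (totalDegree_mul_of_isDomain (left_ne_zero_of_mul hp0) (right_ne_zero_of_mul hp0))
  rw [hp.totalDegree hp0, hf.totalDegree (left_ne_zero_of_mul hp0)] at hc
  omega

-- Rescaling the generic point by `1 / l` kills `l - 1` and multiplies `q` by a unit.
theorem eq_zero_of_sub_one_dvd (hl : l.IsHomogeneous 1) (hl0 : l ≠ 0) (hq : q.IsHomogeneous n)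
    (hdvd : l - 1 ∣ q) : q = 0 := by
  let K := FractionRing (MvPolynomial σ k)
  let ι := algebraMap (MvPolynomial σ k) K
  have hι (p : MvPolynomial σ k) : aeval (fun i ↦ ι (X i)) p = ι p := by
    rw [show ι p = algebraMap _ K (aeval X p) by rw [aeval_X_left_apply]]
    exact aeval_algebraMap_apply K X p
  have hιl : ι l ≠ 0 := by simpa [ι] using hl0
  obtain ⟨r, rfl⟩ := hdvd
  have h := aeval_mul_of_isHomogeneous hq (ι l)⁻¹ (fun i ↦ ι (X i))
  rw [map_mul, map_sub, aeval_mul_of_isHomogeneous hl, hι, hι, pow_one, inv_mul_cancel₀ hιl,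
    map_one, sub_self, zero_mul, eq_comm, mul_eq_zero] at h
  exact (map_eq_zero_iff ι (IsFractionRing.injective _ K)).1
    (h.resolve_left (pow_ne_zero _ (inv_ne_zero hιl)))

theorem prime_of_isHomogeneous_one (hl : l.IsHomogeneous 1) (hl0 : l ≠ 0) : Prime l := by
  refine (irreducible_of_totalDegree_eq_one (hl.totalDegree hl0) fun x hx ↦ ?_).prime
  obtain ⟨m, hm⟩ := ne_zero_iff.1 hl0
  exact (ne_zero_of_dvd_ne_zero hm (hx m)).isUnit

end Field

/-! ### Saturation of complete intersections -/

-- Second syzygies of the regular sequence `x, y, z`: comparing the representations of `x g`, `y g`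
-- and `z g` over `f, h` gives a Koszul relation modulo `(x, y)`, which corrects the first one to
-- a representation divisible by `x`.
theorem mem_span_pair_of_mul_mem {R : Type*} [CommRing R] [IsDomain R] {f g h x y z : R}
    (hx : x ≠ 0) (hy : ∀ t, x ∣ y * t → x ∣ t)
    (hz : ∀ t, z * t ∈ Ideal.span {x, y} → t ∈ Ideal.span {x, y})
    (hf : f ≠ 0) (hh : ∀ t, f ∣ t * h → f ∣ t) (hxg : x * g ∈ Ideal.span {f, h})
    (hyg : y * g ∈ Ideal.span {f, h}) (hzg : z * g ∈ Ideal.span {f, h}) :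
    g ∈ Ideal.span {f, h} := by
  simp only [Ideal.mem_span_pair] at hxg hyg hzg
  obtain ⟨a₀, b₀, h₀⟩ := hxg
  obtain ⟨a₁, b₁, h₁⟩ := hyg
  obtain ⟨a₂, b₂, h₂⟩ := hzg
  have syzygy {u v a b a' b' : R} (hu : a * f + b * h = u * g) (hv : a' * f + b' * h = v * g) :
      ∃ c, v * a - u * a' = c * h ∧ v * b - u * b' = -c * f := by
    obtain ⟨c, hc⟩ := hh (v * b - u * b') ⟨u * a' - v * a, by linear_combination v * hu - u * hv⟩
    refine ⟨-c, mul_left_cancel₀ hf ?_, by linear_combination hc⟩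
    linear_combination v * hu - u * hv - h * hc
  obtain ⟨c₀₁, ha₀₁, hb₀₁⟩ := syzygy h₀ h₁
  obtain ⟨c₁₂, -, hb₁₂⟩ := syzygy h₁ h₂
  obtain ⟨c₂₀, -, hb₂₀⟩ := syzygy h₂ h₀
  have hcyc : z * c₀₁ + x * c₁₂ + y * c₂₀ = 0 := mul_left_cancel₀ hf (by
    linear_combination z * hb₀₁ + x * hb₁₂ + y * hb₂₀)
  obtain ⟨e₁, e₀, he⟩ := Ideal.mem_span_pair.1 <| hz c₀₁ <| Ideal.mem_span_pair.2
    ⟨-c₁₂, -c₂₀, by linear_combination -hcyc⟩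
  obtain ⟨s, hs⟩ := hy (a₀ - e₀ * h) ⟨a₁ + e₁ * h, by linear_combination ha₀₁ - h * he⟩
  obtain ⟨t, ht⟩ := hy (b₀ + e₀ * f) ⟨b₁ - e₁ * f, by linear_combination hb₀₁ + f * he⟩
  refine Ideal.mem_span_pair.2 ⟨s, t, mul_left_cancel₀ hx ?_⟩
  linear_combination h₀ - f * hs - h * ht

theorem mem_span_pair_of_X_pow_mul_mem {k : Type*} [Field k] {f g h : MvPolynomial (Fin 3) k}
    {n : Fin 3 → ℕ} (hf : f ≠ 0) (hh : ∀ t, f ∣ t * h → f ∣ t)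
    (hg : ∀ i, X i ^ n i * g ∈ Ideal.span {f, h}) : g ∈ Ideal.span {f, h} := by
  refine mem_span_pair_of_mul_mem (pow_ne_zero _ (X_ne_zero 0)) (fun t ht ↦ ?_) (fun t ht ↦ ?_)
    hf hh (hg 0) (hg 1) (hg 2)
  · refine (X_prime (R := k) (i := (0 : Fin 3))).pow_dvd_of_dvd_mul_left (n 0) (fun hX ↦ ?_) ht
    exact absurd (X_dvd_X.1 (X_prime.dvd_of_dvd_pow hX)) (by decide)
  · have hspan : ({X 0 ^ n 0, X 1 ^ n 1} : Set (MvPolynomial (Fin 3) k)) =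
        (fun s ↦ monomial s 1) '' {Finsupp.single 0 (n 0), Finsupp.single 1 (n 1)} := by
      simp only [Set.image_pair, X_pow_eq_monomial]
    rw [hspan, mem_ideal_span_monomial_image] at ht ⊢
    intro m hm
    obtain ⟨s, hs, hsm⟩ := ht (Finsupp.single 2 (n 2) + m) (by
      rw [X_pow_eq_monomial, mem_support_iff, coeff_monomial_mul]
      simpa using hm)
    refine ⟨s, hs, ?_⟩
    rcases hs with rfl | rfl <;> simpa using hsm

/-! ### The order filtration at a point -/

theorem sup_mul_sup_le {R : Type*} [CommRing R] (I J K : Ideal R) :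
    (I ⊔ J) * (I ⊔ K) ≤ I ⊔ J * K := by
  rw [Ideal.sup_mul, Ideal.mul_sup J]
  exact sup_le (le_sup_of_le_left Ideal.mul_le_left)
    (sup_le_sup_right Ideal.mul_le_right _)

theorem sup_pow_le {R : Type*} [CommRing R] (I J : Ideal R) (n : ℕ) :
    (I ⊔ J) ^ n ≤ I ⊔ J ^ n := by
  induction n with
  | zero => simp
  | succ n ih =>
    rw [pow_succ, pow_succ]
    exact (Ideal.mul_mono_left ih).trans (sup_mul_sup_le I (J ^ n) J)

section Order

variable {k : Type*} [Field k] {f g h : MvPolynomial (Fin 3) k} {P : PlanePoint f} {m n : ℕ}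

theorem exists_slicePoly_eq {v : Fin 3 → k} (hv : v ≠ 0) :
    ∃ i, v i ≠ 0 ∧ slicePoly v = C (v i)⁻¹ * X i - 1 := by
  have h : ∃ i, v i ≠ 0 := Function.ne_iff.1 hv
  exact ⟨h.choose, h.choose_spec, by rw [slicePoly, dif_pos h]⟩

theorem eval_slicePoly {v : Fin 3 → k} (hv : v ≠ 0) : eval v (slicePoly v) = 0 := by
  obtain ⟨i, hi, heq⟩ := exists_slicePoly_eq hv
  simp [heq, hi]

variable (P) in
/-- The polynomials whose restriction to the affine chart of the curve at `P` vanishes to order at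
least `n` at `P`; `ordAt` is the supremum of the `n` such that `g ∈ orderIdeal P n`. -/
def orderIdeal (n : ℕ) : Ideal (MvPolynomial (Fin 3) k) where
  carrier := {g | ∃ h : MvPolynomial (Fin 3) k, eval P.1.rep h ≠ 0 ∧
    h * g ∈ Ideal.span {f, slicePoly P.1.rep} + (RingHom.ker (eval P.1.rep)) ^ n}
  zero_mem' := ⟨1, by simp⟩
  add_mem' := by
    rintro g₁ g₂ ⟨h₁, hne₁, hmem₁⟩ ⟨h₂, hne₂, hmem₂⟩
    refine ⟨h₁ * h₂, by simp [hne₁, hne₂], ?_⟩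
    rw [show h₁ * h₂ * (g₁ + g₂) = h₂ * (h₁ * g₁) + h₁ * (h₂ * g₂) by ring]
    exact add_mem (Ideal.mul_mem_left _ _ hmem₁) (Ideal.mul_mem_left _ _ hmem₂)
  smul_mem' := by
    rintro a g ⟨h, hne, hmem⟩
    exact ⟨h, hne, by simpa only [smul_eq_mul, mul_left_comm] using Ideal.mul_mem_left _ a hmem⟩

theorem orderIdeal_zero : orderIdeal P 0 = ⊤ :=
  (Ideal.eq_top_iff_one _).2 ⟨1, by simp, by simp⟩

theorem orderIdeal_antitone : Antitone (orderIdeal P) := fun _ _ hnm _ ⟨h, hne, hmem⟩ ↦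
  ⟨h, hne, add_le_add_right (Ideal.pow_le_pow_right hnm) _ hmem⟩

theorem self_mem_orderIdeal : f ∈ orderIdeal P n :=
  ⟨1, by simp, by
    rw [one_mul]
    exact Ideal.mem_sup_left (Ideal.subset_span (Set.mem_insert _ _))⟩

theorem mem_orderIdeal_of_mul_mem (hh : eval P.1.rep h ≠ 0) (hmem : h * g ∈ orderIdeal P n) :
    g ∈ orderIdeal P n := by
  obtain ⟨s, hs, hmem⟩ := hmem
  exact ⟨s * h, by simp [hs, hh], by rwa [mul_assoc]⟩

theorem mul_mem_orderIdeal (hg : g ∈ orderIdeal P n) (hh : h ∈ orderIdeal P m) :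
    g * h ∈ orderIdeal P (n + m) := by
  obtain ⟨s, hs, hsg⟩ := hg
  obtain ⟨t, ht, hth⟩ := hh
  refine ⟨s * t, by simp [hs, ht], ?_⟩
  rw [mul_mul_mul_comm, pow_add]
  exact sup_mul_sup_le _ _ _ (Ideal.mul_mem_mul hsg hth)

theorem pow_mem_orderIdeal (hg : g ∈ orderIdeal P 1) (n : ℕ) : g ^ n ∈ orderIdeal P n := by
  induction n with
  | zero => simp [orderIdeal_zero]
  | succ n ih => exact pow_succ g n ▸ mul_mem_orderIdeal ih hg

theorem mem_orderIdeal_one : g ∈ orderIdeal P 1 ↔ eval P.1.rep g = 0 := by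
  have hle : Ideal.span {f, slicePoly P.1.rep} ≤ RingHom.ker (eval P.1.rep) := by
    rw [Ideal.span_le]
    rintro _ (rfl | rfl)
    exacts [P.2, eval_slicePoly P.1.rep_nonzero]
  refine ⟨fun ⟨h, hne, hmem⟩ ↦ ?_, fun hg ↦ ⟨1, by simp, ?_⟩⟩
  · rw [pow_one, Submodule.add_eq_sup, sup_eq_right.2 hle, RingHom.mem_ker, map_mul] at hmem
    exact (mul_eq_zero.1 hmem).resolve_left hne
  · rw [pow_one, one_mul]
    exact Ideal.mem_sup_right hg

theorem mem_orderIdeal_of_dvd_sub (hdvd : f ∣ g - h) (hh : h ∈ orderIdeal P n) :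
    g ∈ orderIdeal P n :=
  (sub_add_cancel g h) ▸ add_mem (Ideal.mem_of_dvd _ hdvd self_mem_orderIdeal) hh

/-- The restriction of `g` to the curve vanishes at `P` to order exactly `n`. -/
def HasOrderAt (P : PlanePoint f) (g : MvPolynomial (Fin 3) k) (n : ℕ) : Prop :=
  g ∈ orderIdeal P n ∧ g ∉ orderIdeal P (n + 1)

theorem HasOrderAt.mem_orderIdeal_iff (hg : HasOrderAt P g n) : g ∈ orderIdeal P m ↔ m ≤ n :=
  ⟨fun hm ↦ not_lt.1 fun hlt ↦ hg.2 (orderIdeal_antitone hlt hm),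
    fun hle ↦ orderIdeal_antitone hle hg.1⟩

theorem HasOrderAt.ordAt_eq (hg : HasOrderAt P g n) : ordAt f P g = n := by
  have hset : {m | g ∈ orderIdeal P m} = Set.Iic n := Set.ext fun m ↦ hg.mem_orderIdeal_iff
  exact (congrArg sSup hset).trans (csSup_Iic)

theorem hasOrderAt_zero_iff : HasOrderAt P g 0 ↔ eval P.1.rep g ≠ 0 := by
  simp [HasOrderAt, orderIdeal_zero, mem_orderIdeal_one]

theorem exists_hasOrderAt_lt (hg : g ∉ orderIdeal P m) : ∃ n < m, HasOrderAt P g n := by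
  induction m with
  | zero => exact absurd (by simp [orderIdeal_zero]) hg
  | succ m ih =>
    by_cases hm : g ∈ orderIdeal P m
    · exact ⟨m, m.lt_succ_self, hm, hg⟩
    · obtain ⟨n, hn, h⟩ := ih hm
      exact ⟨n, hn.trans m.lt_succ_self, h⟩

end Order

/-! ### Uniformizers at the points of a smooth curve -/

section Smooth

variable {k : Type*} [Field k]

/-- `f` is an equation of a smooth plane curve of degree `d`. Its irreducibility, which follows from
smoothness, is recorded as well. -/
structure IsSmoothCurve (d : ℕ) (f : MvPolynomial (Fin 3) k) : Prop where
  isHomogeneous : f.IsHomogeneous d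
  prime : Prime f
  smooth : ∀ v : Fin 3 → k, eval v f = 0 → (∀ i, eval v (pderiv i f) = 0) → v = 0

variable {f : MvPolynomial (Fin 3) k}

/-- A line through `P` whose equation generates the maximal ideal of the local ring of the curve at
`P`. -/
structure IsUniformizer (P : PlanePoint f) (M : MvPolynomial (Fin 3) k) : Prop where
  isHomogeneous : M.IsHomogeneous 1
  not_dvd : ¬ f ∣ M
  eval_eq_zero : eval P.1.rep M = 0
  exists_mul_mem : ∃ u : MvPolynomial (Fin 3) k, eval P.1.rep u ≠ 0 ∧
    ∀ a, eval P.1.rep a = 0 → u * a ∈ Ideal.span {f, slicePoly P.1.rep} ⊔ Ideal.span {M}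

variable {d e n m : ℕ} {g h M : MvPolynomial (Fin 3) k} {P : PlanePoint f}

theorem aeval_C_comp {σ : Type*} (v : σ → k) (a : MvPolynomial σ k) :
    aeval (fun i ↦ (C (v i) : MvPolynomial σ k)) a = C (eval v a) :=
  aeval_algebraMap_apply _ v a

theorem mem_span_X_sub_C_mul {σ : Type*} {f l : MvPolynomial σ k} {v : σ → k}
    (hf : f.IsHomogeneous d) (hfv : eval v f = 0) :
    f ∈ Ideal.span (Set.range fun i ↦ X i - C (v i) * l) := by
  have hzero : aeval (fun i ↦ C (v i) * l) f = 0 := by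
    simp only [mul_comm _ l, aeval_mul_of_isHomogeneous hf, aeval_C_comp, hfv, C_0, mul_zero]
  rw [← sub_zero f, ← hzero]
  exact sub_aeval_mem_of_X_sub_mem (q := fun i ↦ C (v i) * l)
    (fun i ↦ Ideal.subset_span (Set.mem_range_self i)) f

-- The forms `X i - v i * l` cut out the point, so `f` is a combination of them, and by smoothness
-- some coefficient does not vanish at the point.
theorem IsSmoothCurve.exists_local_coordinates (hf : IsSmoothCurve d f) (P : PlanePoint f) :
    ∃ l y z a b : MvPolynomial (Fin 3) k, slicePoly P.1.rep = l - 1 ∧ z.IsHomogeneous 1 ∧ z ≠ 0 ∧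
      eval P.1.rep z = 0 ∧ ¬ z ∣ y ∧ (∀ i, X i - C (P.1.rep i) * l ∈ Ideal.span {y, z}) ∧
      f = a * y + b * z ∧ eval P.1.rep a ≠ 0 := by
  obtain ⟨i₀, hi₀, hslice⟩ := exists_slicePoly_eq P.1.rep_nonzero
  have hfv : eval P.1.rep f = 0 := P.2
  have hv := P.1.rep_nonzero
  generalize P.1.rep = v at *
  set l : MvPolynomial (Fin 3) k := C (v i₀)⁻¹ * X i₀ with hl
  obtain ⟨a, ha⟩ := Ideal.mem_span_range_iff_exists_fun.1 <|
    mem_span_X_sub_C_mul (l := l) hf.isHomogeneous hfv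
  obtain ⟨y, hy⟩ : ∃ y : Fin 3 → MvPolynomial (Fin 3) k, ∀ j, X j - C (v j) * l = y j :=
    ⟨_, fun _ ↦ rfl⟩
  simp only [hy] at ha ⊢
  have hyv (j) : eval v (y j) = 0 := by simp [← hy, hl, hi₀]
  have hyi₀ : y i₀ = 0 := by simp [← hy, hl, ← mul_assoc, ← C_mul, hi₀]
  have hysingle {j : Fin 3} (hj : j ≠ i₀) (i) :
      eval (Pi.single j 1) (y i) = if i = j then 1 else 0 := by
    simp [← hy, hl, hj.symm, Pi.single_apply]
  obtain ⟨j, hj, haj⟩ : ∃ j, j ≠ i₀ ∧ eval v (a j) ≠ 0 := by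
    by_contra! hcon
    refine hv (hf.smooth v hfv fun i ↦ ?_)
    rw [← ha, map_sum, map_sum]
    refine Finset.sum_eq_zero fun j _ ↦ ?_
    rcases eq_or_ne j i₀ with rfl | hj
    · simp [hyi₀]
    · simp [Derivation.leibniz, hcon j hj, hyv]
  obtain ⟨j', hj', hjj', hcover⟩ : ∃ j', j' ≠ i₀ ∧ j' ≠ j ∧ ∀ i, i = i₀ ∨ i = j ∨ i = j' := by
    clear * - hj
    decide +revert
  have huniv : (Finset.univ : Finset (Fin 3)) = {i₀, j, j'} := by ext i; simpa using hcover i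
  refine ⟨l, y j, y j', a j, a j', hslice, ?_, fun h0 ↦ ?_, hyv j', fun ⟨c, hc⟩ ↦ ?_, fun i ↦ ?_,
    ?_, haj⟩
  · exact hy j' ▸ (isHomogeneous_X k j').sub ((isHomogeneous_C_mul_X _ _).C_mul _)
  · simpa [h0] using hysingle hj' j'
  · simpa [hysingle hj, hjj'] using congrArg (eval (Pi.single j 1)) hc
  · rw [hy]
    rcases hcover i with rfl | rfl | rfl
    exacts [hyi₀ ▸ zero_mem _, Ideal.subset_span (by simp), Ideal.subset_span (by simp)]
  · rw [← ha, huniv, Finset.sum_insert (by simp [hj.symm, hj'.symm]), Finset.sum_pair hjj'.symm,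
      hyi₀, mul_zero, zero_add]

-- As `f = a y + b z` with `a` invertible at the point, `y` is eliminated and `z` is a uniformizer.
theorem IsSmoothCurve.exists_isUniformizer (hf : IsSmoothCurve d f) (P : PlanePoint f) :
    ∃ M, IsUniformizer P M := by
  obtain ⟨l, y, z, a, b, hl, hz, hz0, hzv, hzy, hX, hfab, hav⟩ := hf.exists_local_coordinates P
  refine ⟨z, hz, fun hdvd ↦ ?_, hzv, a, hav, fun p hp ↦ ?_⟩
  · have hay : f ∣ a * y := (dvd_add_left (hdvd.mul_left b)).1 (dvd_of_eq hfab)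
    have hfa : ¬ f ∣ a := by
      rintro ⟨c, rfl⟩
      exact hav (by rw [map_mul, P.2, zero_mul])
    have hzf : z ∣ f :=
      hf.prime.irreducible.dvd_symm (prime_of_isHomogeneous_one hz hz0).irreducible hdvd
    exact hzy (hzf.trans ((hf.prime.dvd_or_dvd hay).resolve_left hfa))
  · set K := Ideal.span {f, slicePoly P.1.rep} ⊔ Ideal.span {z}
    have hfK : f ∈ K := Ideal.mem_sup_left (Ideal.subset_span (by simp))
    have hlK : l - 1 ∈ K := Ideal.mem_sup_left (Ideal.subset_span (by simp [hl]))
    have hzK : z ∈ K := Ideal.mem_sup_right (Ideal.mem_span_singleton_self z)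
    have hyz : Ideal.span {y, z} ≤ Submodule.comap (LinearMap.mulLeft _ a) K := by
      rw [Ideal.span_le]
      rintro _ (rfl | rfl)
      · change a * _ ∈ K
        rw [eq_sub_of_add_eq hfab.symm]
        exact sub_mem hfK (Ideal.mul_mem_left _ _ hzK)
      · exact Ideal.mul_mem_left _ _ hzK
    have hXK (i) : X i - C (P.1.rep i) ∈ Submodule.comap (LinearMap.mulLeft _ a) K := by
      rw [show X i - C (P.1.rep i) = (X i - C (P.1.rep i) * l) + C (P.1.rep i) * (l - 1) by ring]
      exact add_mem (hyz (hX i)) (Ideal.mul_mem_left _ _ (Ideal.mul_mem_left _ _ hlK))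
    have hmem := sub_aeval_mem_of_X_sub_mem hXK p
    rwa [aeval_C_comp, hp, C_0, sub_zero] at hmem

theorem IsUniformizer.exists_mul_mem_span_pow (hM : IsUniformizer P M)
    (hmem : g ∈ orderIdeal P n) : ∃ s, eval P.1.rep s ≠ 0 ∧
      s * g ∈ Ideal.span {f, slicePoly P.1.rep} ⊔ Ideal.span {M ^ n} := by
  obtain ⟨s, hs, hsg⟩ := hmem
  obtain ⟨u, hu, huM⟩ := hM.exists_mul_mem
  obtain ⟨x, hx, y, hy, hxy⟩ := Submodule.mem_sup.1 hsg
  refine ⟨u ^ n * s, by simp [hu, hs], ?_⟩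
  rw [mul_assoc, ← hxy, mul_add, ← Ideal.span_singleton_pow]
  refine add_mem (Ideal.mul_mem_left _ _ (Ideal.mem_sup_left hx)) (sup_pow_le _ _ n ?_)
  have hker : Ideal.span {u} * RingHom.ker (eval P.1.rep) ≤
      Ideal.span {f, slicePoly P.1.rep} ⊔ Ideal.span {M} := Ideal.span_singleton_mul_le_iff.2 huM
  refine Ideal.pow_right_mono hker n ?_
  rw [mul_pow]
  exact Ideal.mul_mem_mul (Ideal.pow_mem_pow (Ideal.mem_span_singleton_self u) n) hy

-- The local relation in the affine chart is homogenized with respect to the linear form defining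
-- the chart.
theorem IsUniformizer.exists_mul_eq (hM : IsUniformizer P M) (hf : f.IsHomogeneous d)
    (hg : g.IsHomogeneous e) (hmem : g ∈ orderIdeal P n) :
    ∃ s t c, eval P.1.rep s ≠ 0 ∧ s * g = M ^ n * t + f * c := by
  obtain ⟨s, hs, hloc⟩ := hM.exists_mul_mem_span_pow hmem
  obtain ⟨i, hi, hslice⟩ := exists_slicePoly_eq P.1.rep_nonzero
  set l : MvPolynomial (Fin 3) k := C (P.1.rep i)⁻¹ * X i
  have hl : l.IsHomogeneous 1 := isHomogeneous_C_mul_X _ _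
  have hlP : eval P.1.rep l = 1 := by simp [l, hi]
  simp only [Submodule.mem_sup, Ideal.mem_span_pair, Ideal.mem_span_singleton', hslice] at hloc
  obtain ⟨_, ⟨a, b, rfl⟩, _, ⟨c, rfl⟩, hrel⟩ := hloc
  let N := s.totalDegree + a.totalDegree + c.totalDegree
  obtain ⟨s', hs', rs, hrs⟩ := exists_isHomogeneous_dvd_sub hl (p := s) (n := N + d + n) (by lia)
  obtain ⟨a', ha', ra, hra⟩ := exists_isHomogeneous_dvd_sub hl (p := a) (n := N + n + e) (by lia)
  obtain ⟨c', hc', rc, hrc⟩ := exists_isHomogeneous_dvd_sub hl (p := c) (n := N + d + e) (by lia)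
  have hzero : s' * g - a' * f - M ^ n * c' = 0 := by
    refine eq_zero_of_sub_one_dvd (n := N + d + n + e) hl (fun h0 ↦ by simp [h0] at hlP) ?_
      ⟨rs * g - ra * f - M ^ n * rc + b, ?_⟩
    · refine ((hs'.mul hg).sub ?_).sub ?_
      · convert ha'.mul hf using 1; ring
      · have hMc := (hM.isHomogeneous.pow n).mul hc'
        rwa [show 1 * n + (N + d + e) = N + d + n + e by ring] at hMc
    · linear_combination g * hrs - f * hra - M ^ n * hrc - hrel
  refine ⟨s', c', a', ?_, by linear_combination hzero⟩
  have hs'P := congrArg (eval P.1.rep) hrs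
  simp only [map_sub, map_mul, hlP, map_one, sub_self, zero_mul, sub_eq_zero] at hs'P
  exact hs'P ▸ hs

theorem IsUniformizer.mem_orderIdeal_one (hM : IsUniformizer P M) : M ∈ orderIdeal P 1 :=
  PlaneCurve.mem_orderIdeal_one.2 hM.eval_eq_zero

theorem IsUniformizer.mem_orderIdeal_succ (hM : IsUniformizer P M) {s t c : MvPolynomial (Fin 3) k}
    (hs : eval P.1.rep s ≠ 0) (ht : eval P.1.rep t = 0) (hrel : s * g = M ^ n * t + f * c) :
    g ∈ orderIdeal P (n + 1) := by
  refine mem_orderIdeal_of_mul_mem hs (hrel ▸ add_mem ?_ ?_)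
  · exact mul_mem_orderIdeal (pow_mem_orderIdeal hM.mem_orderIdeal_one n)
      (PlaneCurve.mem_orderIdeal_one.2 ht)
  · exact Ideal.mul_mem_right _ _ self_mem_orderIdeal

theorem IsUniformizer.exists_mul_eq_of_hasOrderAt (hM : IsUniformizer P M) (hf : f.IsHomogeneous d)
    (hg : g.IsHomogeneous e) (hgn : HasOrderAt P g n) :
    ∃ s t c, eval P.1.rep s ≠ 0 ∧ eval P.1.rep t ≠ 0 ∧ s * g = M ^ n * t + f * c := by
  obtain ⟨s, t, c, hs, hrel⟩ := hM.exists_mul_eq hf hg hgn.1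
  exact ⟨s, t, c, hs, fun ht ↦ hgn.2 (hM.mem_orderIdeal_succ hs ht hrel), hrel⟩

theorem IsUniformizer.hasOrderAt_of_mul_eq (hM : IsUniformizer P M) (hf : IsSmoothCurve d f)
    (hg : g.IsHomogeneous e) {s t c : MvPolynomial (Fin 3) k} (hs : eval P.1.rep s ≠ 0)
    (ht : eval P.1.rep t ≠ 0) (hrel : s * g = M ^ n * t + f * c) : HasOrderAt P g n := by
  refine ⟨mem_orderIdeal_of_mul_mem hs (hrel ▸ add_mem ?_ ?_), fun hmem ↦ ?_⟩
  · exact Ideal.mul_mem_right _ _ (pow_mem_orderIdeal hM.mem_orderIdeal_one n)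
  · exact Ideal.mul_mem_right _ _ self_mem_orderIdeal
  · obtain ⟨s', t', c', hs', hrel'⟩ := hM.exists_mul_eq hf.isHomogeneous hg hmem
    have hdvd : f ∣ M ^ n * (s' * t - s * M * t') :=
      ⟨s * c' - s' * c, by linear_combination s * hrel' - s' * hrel⟩
    obtain ⟨r, hr⟩ := (hf.prime.dvd_or_dvd hdvd).resolve_left
      fun h ↦ hM.not_dvd (hf.prime.dvd_of_dvd_pow h)
    have hP := congrArg (eval P.1.rep) hr
    simp only [map_sub, map_mul, hM.eval_eq_zero, mul_zero, zero_mul, sub_zero,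
      show eval P.1.rep f = 0 from P.2] at hP
    exact mul_ne_zero hs' ht hP

theorem IsUniformizer.hasOrderAt (hM : IsUniformizer P M) (hf : IsSmoothCurve d f) :
    HasOrderAt P M 1 :=
  hM.hasOrderAt_of_mul_eq (s := 1) (t := 1) (c := 0) hf hM.isHomogeneous (by simp) (by simp)
    (by ring)

theorem HasOrderAt.mul (hgn : HasOrderAt P g n) (hhm : HasOrderAt P h m) (hf : IsSmoothCurve d f)
    (hg : g.IsHomogeneous e) {b : ℕ} (hh : h.IsHomogeneous b) : HasOrderAt P (g * h) (n + m) := by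
  obtain ⟨M, hM⟩ := hf.exists_isUniformizer P
  obtain ⟨s, t, c, hs, ht, hrel⟩ := hM.exists_mul_eq_of_hasOrderAt hf.isHomogeneous hg hgn
  obtain ⟨s', t', c', hs', ht', hrel'⟩ := hM.exists_mul_eq_of_hasOrderAt hf.isHomogeneous hh hhm
  refine hM.hasOrderAt_of_mul_eq (s := s * s') (t := t * t') (c := c * (s' * h) + M ^ n * t * c') hf
    (hg.mul hh) (by simp [hs, hs']) (by simp [ht, ht']) ?_
  rw [pow_add]
  linear_combination (s' * h) * hrel + M ^ n * t * hrel'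

theorem HasOrderAt.exists_mul_mem_span_pair (hhn : HasOrderAt P h n) (hf : IsSmoothCurve d f)
    (hg : g.IsHomogeneous e) {b : ℕ} (hh : h.IsHomogeneous b) (hgn : g ∈ orderIdeal P n) :
    ∃ s, eval P.1.rep s ≠ 0 ∧ s * g ∈ Ideal.span {f, h} := by
  obtain ⟨M, hM⟩ := hf.exists_isUniformizer P
  obtain ⟨s, t, c, hs, hrel⟩ := hM.exists_mul_eq hf.isHomogeneous hg hgn
  obtain ⟨s', t', c', -, ht', hrel'⟩ := hM.exists_mul_eq_of_hasOrderAt hf.isHomogeneous hh hhn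
  refine ⟨t' * s, by simp [ht', hs], Ideal.mem_span_pair.2 ⟨t' * c - t * c', t * s', ?_⟩⟩
  linear_combination t * hrel' - t' * hrel

theorem HasOrderAt.exists_sub_C_mul_mem (hhn : HasOrderAt P h n) (hf : IsSmoothCurve d f)
    (hg : g.IsHomogeneous e) {b : ℕ} (hh : h.IsHomogeneous b) (hgn : g ∈ orderIdeal P n) :
    ∃ a : k, g - C a * h ∈ orderIdeal P (n + 1) := by
  obtain ⟨M, hM⟩ := hf.exists_isUniformizer P
  obtain ⟨s, t, c, hs, hrel⟩ := hM.exists_mul_eq hf.isHomogeneous hg hgn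
  obtain ⟨s', t', c', hs', ht', hrel'⟩ := hM.exists_mul_eq_of_hasOrderAt hf.isHomogeneous hh hhn
  let a := (eval P.1.rep t / eval P.1.rep s) / (eval P.1.rep t' / eval P.1.rep s')
  refine ⟨a, hM.mem_orderIdeal_succ (s := s * s') (t := s' * t - C a * s * t')
    (c := s' * c - C a * s * c') (by simp [hs, hs']) ?_ ?_⟩
  · simp only [map_sub, map_mul, eval_C, a]
    field_simp
    ring
  · linear_combination s' * hrel - C a * s * hrel'

end Smooth

/-! ### Forms through an effective divisor -/

section Divisor

variable {k : Type*} [Field k] {f g h : MvPolynomial (Fin 3) k} {d m n : ℕ} {P Q : PlanePoint f}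
  {A B : PlanePoint f →₀ ℕ}

theorem degree_induction {α : Type*} {motive : (α →₀ ℕ) → Prop} (zero : motive 0)
    (add_single : ∀ A a, motive A → motive (A + Finsupp.single a 1)) (A : α →₀ ℕ) : motive A := by
  suffices ∀ B A, motive A → motive (A + B) from zero_add A ▸ this A 0 zero
  intro B
  induction B using Finsupp.induction_linear with
  | zero => simp
  | add B C hB hC => exact fun A hA ↦ add_assoc A B C ▸ hC _ (hB _ hA)
  | single a n =>
    induction n with
    | zero => simp
    | succ n ih =>
      intro A hA
      rw [Finsupp.single_add, ← add_assoc]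
      exact add_single _ _ (ih A hA)

theorem exists_eq_add_single {α : Type*} {A : α →₀ ℕ} {a : α} (ha : A a ≠ 0) :
    ∃ B, A = B + Finsupp.single a 1 :=
  ⟨A - Finsupp.single a 1, (tsub_add_cancel_of_le (Finsupp.single_le_iff.2 (by lia))).symm⟩

/-- The forms of degree `m` whose intersection divisor with the curve contains `A`. -/
noncomputable def formsThrough (m : ℕ) (A : PlanePoint f →₀ ℕ) :
    Submodule k (MvPolynomial (Fin 3) k) :=
  homogeneousSubmodule (Fin 3) k m ⊓ (⨅ P, orderIdeal P (A P)).restrictScalars k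

theorem mem_formsThrough :
    g ∈ formsThrough m A ↔ g.IsHomogeneous m ∧ ∀ P, g ∈ orderIdeal P (A P) := by
  simp [formsThrough, Submodule.mem_iInf]

theorem formsThrough_le : formsThrough m A ≤ homogeneousSubmodule (Fin 3) k m := inf_le_left

theorem formsThrough_zero :
    formsThrough m (0 : PlanePoint f →₀ ℕ) = homogeneousSubmodule (Fin 3) k m := by
  simp [formsThrough, orderIdeal_zero]

theorem formsThrough_antitone (m : ℕ) : Antitone (formsThrough (f := f) m) := fun _ _ hAB _ hg ↦
  mem_formsThrough.2 ⟨(mem_formsThrough.1 hg).1, fun P ↦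
    orderIdeal_antitone (hAB P) ((mem_formsThrough.1 hg).2 P)⟩

theorem mem_formsThrough_add_single :
    g ∈ formsThrough m (A + Finsupp.single Q 1) ↔
      g ∈ formsThrough m A ∧ g ∈ orderIdeal Q (A Q + 1) := by
  refine ⟨fun hg ↦ ⟨formsThrough_antitone m le_self_add hg, ?_⟩, fun ⟨hg, hgQ⟩ ↦ ?_⟩
  · simpa using (mem_formsThrough.1 hg).2 Q
  · refine mem_formsThrough.2 ⟨(mem_formsThrough.1 hg).1, fun P ↦ ?_⟩
    rcases eq_or_ne P Q with rfl | hPQ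
    · simpa using hgQ
    · simpa [Finsupp.single_eq_of_ne hPQ] using (mem_formsThrough.1 hg).2 P

theorem mul_mem_formsThrough (hg : g ∈ formsThrough m A) (hh : h ∈ formsThrough n B) :
    g * h ∈ formsThrough (m + n) (A + B) := by
  rw [mem_formsThrough] at *
  exact ⟨hg.1.mul hh.1, fun P ↦ mul_mem_orderIdeal (hg.2 P) (hh.2 P)⟩

theorem exists_line_not_through (P : PlanePoint f) :
    ∃ l : MvPolynomial (Fin 3) k, l.IsHomogeneous 1 ∧ eval P.1.rep l ≠ 0 := by
  obtain ⟨i, hi⟩ := Function.ne_iff.1 P.1.rep_nonzero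
  exact ⟨X i, isHomogeneous_X k i, by simpa using hi⟩

theorem exists_line_separating (hPQ : P ≠ Q) :
    ∃ l : MvPolynomial (Fin 3) k, l.IsHomogeneous 1 ∧ eval Q.1.rep l = 0 ∧ eval P.1.rep l ≠ 0 := by
  obtain ⟨j, hj⟩ := Function.ne_iff.1 Q.1.rep_nonzero
  have hminor : ∃ i, Q.1.rep j * P.1.rep i - Q.1.rep i * P.1.rep j ≠ 0 := by
    by_contra! hcon
    refine hPQ (Subtype.ext ?_)
    rw [← P.1.mk_rep, ← Q.1.mk_rep, Projectivization.mk_eq_mk_iff']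
    refine ⟨P.1.rep j / Q.1.rep j, funext fun i ↦ ?_⟩
    rw [Pi.smul_apply, smul_eq_mul, div_mul_eq_mul_div, div_eq_iff hj]
    linear_combination -hcon i
  obtain ⟨i, hi⟩ := hminor
  refine ⟨C (Q.1.rep j) * X i - C (Q.1.rep i) * X j,
    (isHomogeneous_C_mul_X _ _).sub (isHomogeneous_C_mul_X _ _), ?_, by simpa using hi⟩
  simp [mul_comm]

theorem IsSmoothCurve.exists_line_through (hf : IsSmoothCurve d f) (P Q : PlanePoint f) :
    ∃ l ∈ formsThrough 1 (Finsupp.single Q 1), HasOrderAt P l (Finsupp.single Q 1 P) := by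
  have hmem {l : MvPolynomial (Fin 3) k} (hl : l.IsHomogeneous 1) (hlQ : eval Q.1.rep l = 0) :
      l ∈ formsThrough 1 (Finsupp.single Q 1) := by
    rw [← zero_add (Finsupp.single Q 1), mem_formsThrough_add_single, formsThrough_zero]
    exact ⟨hl, mem_orderIdeal_one.2 hlQ⟩
  rcases eq_or_ne P Q with rfl | hPQ
  · obtain ⟨l, hl⟩ := hf.exists_isUniformizer P
    exact ⟨l, hmem hl.isHomogeneous hl.eval_eq_zero, by simpa using hl.hasOrderAt hf⟩
  · obtain ⟨l, hl, hlQ, hlP⟩ := exists_line_separating hPQ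
    exact ⟨l, hmem hl hlQ, by simpa [Finsupp.single_eq_of_ne hPQ] using hasOrderAt_zero_iff.2 hlP⟩

theorem IsSmoothCurve.exists_form_through (hf : IsSmoothCurve d f) (P : PlanePoint f)
    (hAm : A.degree ≤ m) : ∃ g ∈ formsThrough m A, HasOrderAt P g (A P) := by
  induction A using degree_induction generalizing m with
  | zero =>
    obtain ⟨l, hl, hlP⟩ := exists_line_not_through P
    refine ⟨l ^ m, ?_, hasOrderAt_zero_iff.2 (by simp [hlP])⟩
    simpa [formsThrough_zero] using hl.pow m
  | add_single A Q ih =>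
    rw [map_add, Finsupp.degree_single] at hAm
    obtain ⟨m, rfl⟩ := Nat.exists_eq_add_of_le' (Nat.le_of_add_left_le hAm)
    obtain ⟨g, hg, hgP⟩ := ih (Nat.le_of_add_le_add_right hAm)
    obtain ⟨l, hl, hlP⟩ := hf.exists_line_through P Q
    exact ⟨g * l, mul_mem_formsThrough hg hl,
      hgP.mul hlP hf (mem_formsThrough.1 hg).1 (mem_formsThrough.1 hl).1⟩

end Divisor

section Dimension

variable {k : Type*} [Field k] {f : MvPolynomial (Fin 3) k} {d m : ℕ} {A : PlanePoint f →₀ ℕ}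

theorem two_mul_finrank_homogeneousSubmodule (m : ℕ) :
    2 * Module.finrank k (homogeneousSubmodule (Fin 3) k m) = (m + 1) * (m + 2) := by
  have hset : {x : Fin 3 →₀ ℕ | x.degree = m} =
      ((Finset.univ : Finset (Fin 3)).finsuppAntidiag m : Set (Fin 3 →₀ ℕ)) := by
    ext x
    simp [Finset.mem_finsuppAntidiag, Finsupp.degree_eq_sum]
  have hequiv : homogeneousSubmodule (Fin 3) k m ≃ₗ[k]
      ((Finset.univ : Finset (Fin 3)).finsuppAntidiag m →₀ k) :=
    (LinearEquiv.ofEq _ _ (by rw [homogeneousSubmodule_eq_finsupp_supported, hset])).trans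
      (AddMonoidAlgebra.supportedEquivFinsupp _)
  rw [hequiv.finrank_eq, Module.finrank_finsupp_self, Fintype.card_coe,
    Finset.card_finsuppAntidiag_nat_eq_choose, Finset.card_univ, Fintype.card_fin,
    show 3 + m - 1 = m + 2 by lia, Nat.choose_symm_add, Nat.choose_two_right,
    Nat.mul_div_cancel' (Nat.even_mul_pred_self _).two_dvd]
  exact mul_comm _ _

instance (m : ℕ) : Module.Finite k (homogeneousSubmodule (Fin 3) k m) :=
  Module.Finite.iff_fg.2 (homogeneousSubmodule_fg _ _ m)

instance : Module.Finite k (formsThrough m A) :=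
  Submodule.finiteDimensional_of_le formsThrough_le

theorem IsSmoothCurve.finrank_formsThrough_le_add_single (hf : IsSmoothCurve d f) (m : ℕ)
    (A : PlanePoint f →₀ ℕ) (Q : PlanePoint f) :
    Module.finrank k (formsThrough m A) ≤
      Module.finrank k (formsThrough m (A + Finsupp.single Q 1)) + 1 := by
  by_cases hle : formsThrough m A ≤ formsThrough m (A + Finsupp.single Q 1)
  · exact (Submodule.finrank_mono hle).trans (Nat.le_succ _)
  obtain ⟨q, hq, hqQ⟩ := SetLike.not_le_iff_exists.1 hle
  have hqord : HasOrderAt Q q (A Q) :=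
    ⟨(mem_formsThrough.1 hq).2 Q, fun h ↦ hqQ (mem_formsThrough_add_single.2 ⟨hq, h⟩)⟩
  have hspan : formsThrough m A ≤
      formsThrough m (A + Finsupp.single Q 1) ⊔ Submodule.span k {q} := by
    intro g hg
    obtain ⟨a, ha⟩ := hqord.exists_sub_C_mul_mem hf (mem_formsThrough.1 hg).1
      (mem_formsThrough.1 hq).1 ((mem_formsThrough.1 hg).2 Q)
    rw [← smul_eq_C_mul] at ha
    rw [← sub_add_cancel g (a • q)]
    exact Submodule.add_mem_sup (mem_formsThrough_add_single.2
      ⟨sub_mem hg (Submodule.smul_mem _ a hq), ha⟩)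
      (Submodule.smul_mem _ a (Submodule.mem_span_singleton_self q))
  calc Module.finrank k (formsThrough m A)
      ≤ Module.finrank k
          (formsThrough m (A + Finsupp.single Q 1) ⊔ Submodule.span k {q} : Submodule k _) :=
        Submodule.finrank_mono hspan
    _ ≤ _ := Submodule.finrank_add_le_finrank_add_finrank _ _
    _ ≤ _ := by
        gcongr
        exact (finrank_span_le_card {q}).trans (by simp)

theorem IsSmoothCurve.finrank_homogeneousSubmodule_le (hf : IsSmoothCurve d f) (m : ℕ)
    (A : PlanePoint f →₀ ℕ) :
    Module.finrank k (homogeneousSubmodule (Fin 3) k m) ≤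
      Module.finrank k (formsThrough m A) + A.degree := by
  induction A using degree_induction with
  | zero => rw [formsThrough_zero, map_zero, add_zero]
  | add_single A Q ih =>
    have := hf.finrank_formsThrough_le_add_single m A Q
    rw [map_add, Finsupp.degree_single]
    lia

theorem IsSmoothCurve.finrank_formsThrough_add_degree (hf : IsSmoothCurve d f)
    (hAm : A.degree ≤ m + 1) : Module.finrank k (formsThrough m A) + A.degree =
      Module.finrank k (homogeneousSubmodule (Fin 3) k m) := by
  refine le_antisymm ?_ (hf.finrank_homogeneousSubmodule_le m A)
  induction A using degree_induction with
  | zero => rw [formsThrough_zero, map_zero, add_zero]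
  | add_single A Q ih =>
    rw [map_add, Finsupp.degree_single] at hAm ⊢
    have hA : A.degree ≤ m := Nat.le_of_succ_le_succ hAm
    obtain ⟨q, hq, hqQ⟩ := hf.exists_form_through Q hA
    have hlt : formsThrough m (A + Finsupp.single Q 1) < formsThrough m A :=
      (formsThrough_antitone m le_self_add).lt_of_not_ge fun hle ↦
        hqQ.2 (mem_formsThrough_add_single.1 (hle hq)).2
    have := Submodule.finrank_lt_finrank_of_lt hlt
    have := ih (hA.trans (Nat.le_succ m))
    lia

end Dimension

/-! ### Bézout's theorem -/

section Multiples

variable {k : Type*} [Field k] {f g : MvPolynomial (Fin 3) k} {d e n : ℕ}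

/-- The forms of degree `n` divisible by `f`. -/
noncomputable def multiples (f : MvPolynomial (Fin 3) k) (n : ℕ) :
    Submodule k (MvPolynomial (Fin 3) k) :=
  homogeneousSubmodule (Fin 3) k n ⊓ (Ideal.span {f}).restrictScalars k

theorem mem_multiples : g ∈ multiples f n ↔ g.IsHomogeneous n ∧ f ∣ g := by
  simp [multiples, Ideal.mem_span_singleton]

instance : Module.Finite k (multiples f n) :=
  Submodule.finiteDimensional_of_le (inf_le_left : _ ≤ homogeneousSubmodule (Fin 3) k n)

theorem finrank_multiples (hf : f.IsHomogeneous d) (hf0 : f ≠ 0) (n : ℕ) :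
    Module.finrank k (multiples f (n + d)) =
      Module.finrank k (homogeneousSubmodule (Fin 3) k n) := by
  have hmap : multiples f (n + d) =
      (homogeneousSubmodule (Fin 3) k n).map (LinearMap.mulRight k f) := by
    ext p
    simp only [mem_multiples, Submodule.mem_map, mem_homogeneousSubmodule,
      LinearMap.mulRight_apply]
    constructor
    · rintro ⟨hp, hdvd⟩
      obtain ⟨c, hc, rfl⟩ := exists_isHomogeneous_eq_mul hf hp hdvd
      exact ⟨c, hc, rfl⟩
    · rintro ⟨c, hc, rfl⟩
      exact ⟨hc.mul hf, dvd_mul_left f c⟩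
  rw [hmap]
  exact (Submodule.equivMapOfInjective _ (mul_left_injective₀ hf0) _).finrank_eq.symm

theorem multiples_inf (hf : Prime f) (hfg : ¬ f ∣ g) (n : ℕ) :
    multiples f n ⊓ multiples g n = multiples (f * g) n := by
  ext p
  simp only [Submodule.mem_inf, mem_multiples]
  refine ⟨fun ⟨⟨hp, hfp⟩, _, hgp⟩ ↦ ⟨hp, ?_⟩, fun ⟨hp, hdvd⟩ ↦
    ⟨⟨hp, (dvd_mul_right f g).trans hdvd⟩, hp, (dvd_mul_left g f).trans hdvd⟩⟩
  obtain ⟨c, rfl⟩ := hgp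
  rw [mul_comm f]
  exact mul_dvd_mul_left g ((hf.dvd_or_dvd hfp).resolve_left hfg)

theorem finrank_multiples_sup_add (hf : f.IsHomogeneous d) (hg : g.IsHomogeneous e)
    (hfp : Prime f) (hfg : ¬ f ∣ g) (n : ℕ) :
    Module.finrank k (multiples f (n + d + e) ⊔ multiples g (n + d + e) : Submodule k _) + d * e =
      Module.finrank k (homogeneousSubmodule (Fin 3) k (n + d + e)) := by
  have hg0 : g ≠ 0 := fun h ↦ hfg (h ▸ dvd_zero f)
  have hsum := Submodule.finrank_sup_add_finrank_inf_eq (multiples f (n + d + e))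
    (multiples g (n + d + e))
  rw [multiples_inf hfp hfg, finrank_multiples hg hg0, add_assoc n,
    finrank_multiples (hf.mul hg) (mul_ne_zero hfp.ne_zero hg0), add_comm d, ← add_assoc,
    finrank_multiples hf hfp.ne_zero] at hsum
  have h₁ := two_mul_finrank_homogeneousSubmodule (k := k) n
  have h₂ := two_mul_finrank_homogeneousSubmodule (k := k) (n + d)
  have h₃ := two_mul_finrank_homogeneousSubmodule (k := k) (n + e)
  have h₄ := two_mul_finrank_homogeneousSubmodule (k := k) (n + d + e)
  rw [add_right_comm] at hsum
  linarith

end Multiples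

section Bezout

variable {k : Type*} [Field k] {f g h : MvPolynomial (Fin 3) k} {b d e m : ℕ}
  {P : PlanePoint f} {A B : PlanePoint f →₀ ℕ}

theorem multiples_le_formsThrough : multiples f m ≤ formsThrough m A := fun _ hg ↦
  mem_formsThrough.2 ⟨(mem_multiples.1 hg).1, fun _ ↦
    Ideal.mem_of_dvd _ (mem_multiples.1 hg).2 self_mem_orderIdeal⟩

theorem multiples_le_formsThrough_of_mem (hg : g ∈ formsThrough e A) :
    multiples g m ≤ formsThrough m A := fun _ hp ↦
  mem_formsThrough.2 ⟨(mem_multiples.1 hp).1, fun P ↦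
    Ideal.mem_of_dvd _ (mem_multiples.1 hp).2 ((mem_formsThrough.1 hg).2 P)⟩

theorem IsSmoothCurve.degree_le_mul (hf : IsSmoothCurve d f) (hg : g ∈ formsThrough e A)
    (hfg : ¬ f ∣ g) : A.degree ≤ d * e := by
  have hsup : multiples f (A.degree + d + e) ⊔ multiples g (A.degree + d + e) ≤
      formsThrough (A.degree + d + e) A :=
    sup_le multiples_le_formsThrough (multiples_le_formsThrough_of_mem hg)
  have := Submodule.finrank_mono hsup
  have := hf.finrank_formsThrough_add_degree (A := A) (m := A.degree + d + e) (by lia)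
  have := finrank_multiples_sup_add hf.isHomogeneous (mem_formsThrough.1 hg).1 hf.prime hfg A.degree
  lia

/-- `g` is a form of degree `e` which cuts out the divisor `B` on the curve. -/
structure HasDivisor (e : ℕ) (g : MvPolynomial (Fin 3) k) (B : PlanePoint f →₀ ℕ) : Prop where
  isHomogeneous : g.IsHomogeneous e
  not_dvd : ¬ f ∣ g
  hasOrderAt : ∀ P, HasOrderAt P g (B P)

theorem HasDivisor.mem_formsThrough_iff (hg : HasDivisor e g B) : g ∈ formsThrough e A ↔ A ≤ B := by
  simp only [mem_formsThrough, hg.isHomogeneous, true_and, (hg.hasOrderAt _).mem_orderIdeal_iff]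
  rfl

theorem HasDivisor.mem_formsThrough (hg : HasDivisor e g B) : g ∈ formsThrough e B :=
  hg.mem_formsThrough_iff.2 le_rfl

theorem HasDivisor.mul (hg : HasDivisor e g A) (hh : HasDivisor b h B) (hf : IsSmoothCurve d f) :
    HasDivisor (e + b) (g * h) (A + B) where
  isHomogeneous := hg.isHomogeneous.mul hh.isHomogeneous
  not_dvd hdvd := (hf.prime.dvd_or_dvd hdvd).elim hg.not_dvd hh.not_dvd
  hasOrderAt P := (hg.hasOrderAt P).mul (hh.hasOrderAt P) hf hg.isHomogeneous hh.isHomogeneous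

theorem IsSmoothCurve.exists_hasDivisor (hf : IsSmoothCurve d f) (hg : g.IsHomogeneous e)
    (hfg : ¬ f ∣ g) : ∃ B : PlanePoint f →₀ ℕ, HasDivisor e g B := by
  have hbound (P : PlanePoint f) : g ∉ orderIdeal P (d * e + 1) := fun hgP ↦ by
    have hmem : g ∈ formsThrough e (Finsupp.single P (d * e + 1)) := by
      refine PlaneCurve.mem_formsThrough.2 ⟨hg, fun R ↦ ?_⟩
      rcases eq_or_ne R P with rfl | hRP
      · simpa using hgP
      · simp [Finsupp.single_eq_of_ne hRP, orderIdeal_zero]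
    have hdeg := hf.degree_le_mul hmem hfg
    rw [Finsupp.degree_single] at hdeg
    exact hdeg.not_gt (Nat.lt_succ_self _)
  choose b _ hb using fun P : PlanePoint f ↦ exists_hasOrderAt_lt (hbound P)
  have hfin : (Function.support b).Finite := by
    classical
    by_contra hinf
    obtain ⟨s, hs, hcard⟩ := Set.Infinite.exists_subset_card_eq hinf (d * e + 1)
    have hmem : g ∈ formsThrough e (∑ P ∈ s, Finsupp.single P 1) := by
      refine PlaneCurve.mem_formsThrough.2 ⟨hg, fun P ↦ (hb P).mem_orderIdeal_iff.2 ?_⟩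
      simp only [Finsupp.coe_finsetSum, Finset.sum_apply, Finsupp.single_apply, Finset.sum_ite_eq']
      split_ifs with hP
      exacts [Nat.one_le_iff_ne_zero.2 (hs hP), Nat.zero_le _]
    have hdeg := hf.degree_le_mul hmem hfg
    simp only [map_sum, Finsupp.degree_single, Finset.sum_const, hcard, smul_eq_mul,
      mul_one] at hdeg
    exact hdeg.not_gt (Nat.lt_succ_self _)
  exact ⟨Finsupp.ofSupportFinite b hfin, hg, hfg, hb⟩

end Bezout

/-! ### Max Noether's theorem -/

section Noether

variable {k : Type*} [Field k] {f g h : MvPolynomial (Fin 3) k} {b d e m n : ℕ}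
  {P : PlanePoint f} {A B C : PlanePoint f →₀ ℕ}

theorem exists_X_pow_mem {σ : Type*} [Finite σ] [IsAlgClosed k] {I : Ideal (MvPolynomial σ k)}
    (hI : ∀ v ≠ 0, ∃ s ∈ I, eval v s ≠ 0) (i : σ) : ∃ n, (X i : MvPolynomial σ k) ^ n ∈ I := by
  have hrad : (X i : MvPolynomial σ k) ∈ I.radical := by
    rw [← vanishingIdeal_zeroLocus_eq_radical (K := k), mem_vanishingIdeal_iff]
    intro v hv
    have hv0 : v = 0 := by
      by_contra hv0
      obtain ⟨s, hs, hsv⟩ := hI v hv0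
      exact hsv (hv s hs)
    simp [hv0]
  exact hrad

theorem exists_mul_mem_span_pair_of_smul {σ : Type*} {f g h s : MvPolynomial σ k} {v w : σ → k}
    {c : k} (hf : f.IsHomogeneous d) (hg : g.IsHomogeneous e) (hh : h.IsHomogeneous b)
    (hs : eval v s ≠ 0) (hmem : s * g ∈ Ideal.span {f, h}) (hc : c ≠ 0) (hw : c • v = w) :
    ∃ t, t * g ∈ Ideal.span {f, h} ∧ eval w t ≠ 0 := by
  obtain ⟨i, hi⟩ : ∃ i, eval v (homogeneousComponent i s) ≠ 0 := by
    by_contra! hcon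
    rw [← sum_homogeneousComponent s, map_sum] at hs
    exact hs (Finset.sum_eq_zero fun i _ ↦ hcon i)
  refine ⟨homogeneousComponent i s, ?_, ?_⟩
  · rw [← homogeneousComponent_add_mul hg]
    exact homogeneousComponent_mem_span_pair hf hh hmem _
  · have hscale := aeval_mul_of_isHomogeneous (homogeneousComponent_isHomogeneous i s) c v
    rw [← hw]
    exact hscale ▸ mul_ne_zero (pow_ne_zero i hc) hi

-- Locally `g` is a multiple of `h`, so the ideal `(f, h) : g` has no zero except the origin and
-- contains powers of the variables; these cancel because `f, h` is a regular sequence.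
theorem HasDivisor.mem_span_pair [IsAlgClosed k] (hh : HasDivisor b h B) (hf : IsSmoothCurve d f)
    (hg : g ∈ formsThrough e B) : g ∈ Ideal.span {f, h} := by
  obtain ⟨hg, hgB⟩ := PlaneCurve.mem_formsThrough.1 hg
  have hcolon (v : Fin 3 → k) (hv : v ≠ 0) :
      ∃ s ∈ (Ideal.span {f, h}).colon {g}, eval v s ≠ 0 := by
    simp only [Submodule.mem_colon_singleton, smul_eq_mul]
    by_cases hfv : eval v f = 0
    · obtain ⟨c, hc⟩ := Projectivization.exists_smul_eq_mk_rep k v hv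
      have hfc := aeval_mul_of_isHomogeneous hf.isHomogeneous (c : k) v
      let P : PlanePoint f := ⟨Projectivization.mk k v hv, by
        rw [← hc]
        exact hfc.trans (mul_eq_zero_of_right _ hfv)⟩
      obtain ⟨s, hs, hmem⟩ := (hh.hasOrderAt P).exists_mul_mem_span_pair hf hg hh.isHomogeneous
        (hgB P)
      exact exists_mul_mem_span_pair_of_smul hf.isHomogeneous hg hh.isHomogeneous hs hmem
        (c⁻¹).ne_zero (inv_smul_eq_iff.2 hc.symm)
    · exact ⟨f, Ideal.mul_mem_right _ _ (Ideal.subset_span (by simp)), hfv⟩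
  choose n hn using exists_X_pow_mem hcolon
  exact mem_span_pair_of_X_pow_mul_mem hf.prime.ne_zero
    (fun t ht ↦ (hf.prime.dvd_or_dvd ht).resolve_right hh.not_dvd)
    fun i ↦ Submodule.mem_colon_singleton.1 (hn i)

theorem HasOrderAt.mem_orderIdeal_of_mul_mem (hhn : HasOrderAt P h n) (hf : IsSmoothCurve d f)
    (hg : g.IsHomogeneous e) (hh : h.IsHomogeneous b) (hmem : g * h ∈ orderIdeal P (n + m)) :
    g ∈ orderIdeal P m := by
  by_contra hgm
  obtain ⟨i, hi, hgi⟩ := exists_hasOrderAt_lt hgm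
  exact (hgi.mul hhn hf hg hh).2 (orderIdeal_antitone (by lia) hmem)

theorem HasDivisor.exists_dvd_sub_mul [IsAlgClosed k] (hh : HasDivisor b h B)
    (hf : IsSmoothCurve d f) (hg : g ∈ formsThrough (e + b) (B + C)) :
    ∃ c ∈ formsThrough e C, f ∣ g - c * h := by
  obtain ⟨c, hc, hdvd⟩ := exists_isHomogeneous_dvd_sub_mul hf.isHomogeneous hh.isHomogeneous
    (PlaneCurve.mem_formsThrough.1 hg).1
    (hh.mem_span_pair hf (formsThrough_antitone _ le_self_add hg))
  refine ⟨c, PlaneCurve.mem_formsThrough.2 ⟨hc, fun P ↦ ?_⟩, hdvd⟩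
  refine (hh.hasOrderAt P).mem_orderIdeal_of_mul_mem hf hc hh.isHomogeneous ?_
  exact mem_orderIdeal_of_dvd_sub ((dvd_sub_comm).1 hdvd) ((PlaneCurve.mem_formsThrough.1 hg).2 P)

theorem HasDivisor.degree_eq [IsAlgClosed k] (hg : HasDivisor e g B) (hf : IsSmoothCurve d f) :
    B.degree = d * e := by
  refine le_antisymm (hf.degree_le_mul hg.mem_formsThrough hg.not_dvd) ?_
  have hsup : formsThrough (0 + d + e) B ≤ multiples f (0 + d + e) ⊔ multiples g (0 + d + e) := by
    intro p hp
    obtain ⟨c, hc, hdvd⟩ := hg.exists_dvd_sub_mul (C := 0) hf (by rwa [add_zero])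
    have hcg : (c * g).IsHomogeneous (0 + d + e) :=
      (PlaneCurve.mem_formsThrough.1 hc).1.mul hg.isHomogeneous
    rw [← sub_add_cancel p (c * g)]
    exact Submodule.add_mem_sup
      (mem_multiples.2 ⟨(PlaneCurve.mem_formsThrough.1 hp).1.sub hcg, hdvd⟩)
      (mem_multiples.2 ⟨hcg, dvd_mul_left g c⟩)
  have := Submodule.finrank_mono hsup
  have := hf.finrank_homogeneousSubmodule_le (0 + d + e) B
  have := finrank_multiples_sup_add hf.isHomogeneous hg.isHomogeneous hf.prime hg.not_dvd 0
  lia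

end Noether

/-! ### Lines and the Cayley–Bacharach property -/

section Lines

variable {k : Type*} [Field k] {f g L K : MvPolynomial (Fin 3) k} {d e : ℕ}
  {P : PlanePoint f} {A B : PlanePoint f →₀ ℕ}

theorem exists_le_degree_eq {α : Type*} {A : α →₀ ℕ} {n : ℕ} (hn : n ≤ A.degree) :
    ∃ B ≤ A, B.degree = n := by
  induction A using degree_induction with
  | zero => exact ⟨0, le_rfl, (Nat.le_zero.1 hn).symm⟩
  | add_single A a ih =>
    rcases hn.eq_or_lt with rfl | hlt
    · exact ⟨_, le_rfl, rfl⟩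
    · rw [map_add, Finsupp.degree_single] at hlt
      obtain ⟨B, hBA, hB⟩ := ih (Nat.le_of_lt_succ hlt)
      exact ⟨B, hBA.trans le_self_add, hB⟩

theorem finrank_homogeneousSubmodule_one :
    Module.finrank k (homogeneousSubmodule (Fin 3) k 1) = 3 := by
  have := two_mul_finrank_homogeneousSubmodule (k := k) 1
  lia

theorem IsSmoothCurve.finrank_formsThrough_one (hf : IsSmoothCurve d f) (hA : A.degree = 2) :
    Module.finrank k (formsThrough 1 A) = 1 := by
  have := hf.finrank_formsThrough_add_degree (A := A) (m := 1) hA.le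
  rw [finrank_homogeneousSubmodule_one] at this
  lia

theorem IsSmoothCurve.formsThrough_one_le (hf : IsSmoothCurve d f) (hA : 2 ≤ A.degree)
    (hAB : A ≤ B) (hL : L ∈ formsThrough 1 B) (hL0 : L ≠ 0) :
    formsThrough 1 A ≤ formsThrough 1 B := by
  obtain ⟨T, hTA, hT⟩ := exists_le_degree_eq hA
  have hB : 1 ≤ Module.finrank k (formsThrough 1 B) :=
    Submodule.one_le_finrank_iff.2 ((Submodule.ne_bot_iff _).2 ⟨L, hL, hL0⟩)
  have hBT : formsThrough 1 B = formsThrough 1 T :=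
    Submodule.eq_of_le_of_finrank_le (formsThrough_antitone 1 (hTA.trans hAB))
      ((hf.finrank_formsThrough_one hT).trans_le hB)
  exact hBT ▸ formsThrough_antitone 1 hTA

theorem IsSmoothCurve.exists_hasDivisor_add (hf : IsSmoothCurve d f) (hg : g ∈ formsThrough e A)
    (hfg : ¬ f ∣ g) : ∃ E, HasDivisor e g (A + E) := by
  obtain ⟨B, hB⟩ := hf.exists_hasDivisor (mem_formsThrough.1 hg).1 hfg
  obtain ⟨E, rfl⟩ := exists_add_of_le (hB.mem_formsThrough_iff.1 hg)
  exact ⟨E, hB⟩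

variable [IsAlgClosed k]

-- Multiply `K` by a second line through `P`: the product passes through the whole divisor of `L`,
-- and its degree is too small for Noether's theorem to leave a multiple of `f`.
theorem HasDivisor.dvd_of_mem_formsThrough (hL : HasDivisor 1 L (B + Finsupp.single P 1))
    (hf : IsSmoothCurve d f) (hK : K ∈ formsThrough e B) (hed : e + 1 < d) : L ∣ K := by
  have hL0 : L ≠ 0 := fun h ↦ hL.not_dvd (h ▸ dvd_zero f)
  obtain ⟨M, hM, hLM⟩ : ∃ M ∈ formsThrough 1 (Finsupp.single P 1), ¬ L ∣ M := by
    by_contra! hdvd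
    have hle : formsThrough 1 (Finsupp.single P 1) ≤ multiples L (0 + 1) := fun M hM ↦
      mem_multiples.2 ⟨(PlaneCurve.mem_formsThrough.1 hM).1, hdvd M hM⟩
    have := Submodule.finrank_mono hle
    have := finrank_multiples hL.isHomogeneous hL0 0
    have := two_mul_finrank_homogeneousSubmodule (k := k) 0
    have := hf.finrank_homogeneousSubmodule_le 1 (Finsupp.single P 1)
    rw [finrank_homogeneousSubmodule_one, Finsupp.degree_single] at this
    lia
  have hKM : K * M ∈ formsThrough (e + 1) (B + Finsupp.single P 1 + 0) := by
    rw [add_zero]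
    exact mul_mem_formsThrough hK hM
  obtain ⟨c, hc, hdvd⟩ := hL.exists_dvd_sub_mul hf hKM
  have hhom : (K * M - c * L).IsHomogeneous (e + 1) :=
    (PlaneCurve.mem_formsThrough.1 hKM).1.sub
      ((PlaneCurve.mem_formsThrough.1 hc).1.mul hL.isHomogeneous)
  have hzero : K * M - c * L = 0 := by
    by_contra hne
    exact not_dvd_of_isHomogeneous_of_lt hf.isHomogeneous hhom hne hed hdvd
  have hLKM : L ∣ K * M := ⟨c, by rw [sub_eq_zero.1 hzero, mul_comm]⟩
  exact ((prime_of_isHomogeneous_one hL.isHomogeneous hL0).dvd_or_dvd hLKM).resolve_right hLM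

end Lines

section CayleyBacharach

variable {k : Type*} [Field k] {f G H q : MvPolynomial (Fin 3) k} {d m r : ℕ}
  {P : PlanePoint f} {A E : PlanePoint f →₀ ℕ}

/-- The Cayley–Bacharach property of an effective divisor `E` with respect to forms of degree `r`:
such a form passes through `E` as soon as it passes through `E` minus one of its points. -/
def CayleyBacharach (r : ℕ) (E : PlanePoint f →₀ ℕ) : Prop :=
  ∀ E' P, E = E' + Finsupp.single P 1 → formsThrough r E' ≤ formsThrough r E

-- With `L` a line through `P`, Noether's theorem gives `H * L * q ≡ K * G` modulo `f`, where `K`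
-- passes through the rest of the divisor of `L`; hence `L ∣ K`, so `K` vanishes at `P`.
theorem HasDivisor.mem_orderIdeal_succ [IsAlgClosed k]
    (hG : HasDivisor m G (A + (E + Finsupp.single P 1))) (hf : IsSmoothCurve (r + 3) f)
    (hH : H ∈ formsThrough m A) (hHP : HasOrderAt P H (A P)) (hq : q ∈ formsThrough r E) :
    q ∈ orderIdeal P (E P + 1) := by
  obtain ⟨L, hL, hLP⟩ := hf.exists_line_through P P
  rw [Finsupp.single_eq_same] at hLP
  have hfL : ¬ f ∣ L := fun h ↦ hLP.2 (Ideal.mem_of_dvd _ h self_mem_orderIdeal)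
  obtain ⟨B, hLB⟩ := hf.exists_hasDivisor_add hL hfL
  have hmem : q * (L * H) ∈ formsThrough (r + 1 + m) (A + (E + Finsupp.single P 1) + B) := by
    rw [show A + (E + Finsupp.single P 1) + B = E + (Finsupp.single P 1 + B + A) by abel, add_assoc]
    exact mul_mem_formsThrough hq (mul_mem_formsThrough hLB.mem_formsThrough hH)
  obtain ⟨K, hK, hdvd⟩ := hG.exists_dvd_sub_mul hf hmem
  rw [add_comm] at hLB
  have hLK : L ∣ K := hLB.dvd_of_mem_formsThrough hf hK (Nat.lt_succ_self _)
  have hKG := mul_mem_orderIdeal (Ideal.mem_of_dvd _ hLK hLP.1) (hG.hasOrderAt P).1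
  have hL1 := hLB.isHomogeneous
  have hHm := (PlaneCurve.mem_formsThrough.1 hH).1
  refine (hLP.mul hHP hf hL1 hHm).mem_orderIdeal_of_mul_mem hf
    (PlaneCurve.mem_formsThrough.1 hq).1 (hL1.mul hHm) ?_
  convert mem_orderIdeal_of_dvd_sub hdvd hKG using 2
  simp only [Finsupp.add_apply, Finsupp.single_eq_same]
  lia

theorem HasDivisor.cayleyBacharach [IsAlgClosed k] (hG : HasDivisor m G (A + E))
    (hf : IsSmoothCurve (r + 3) f) (hH : H ∈ formsThrough m A)
    (hHE : ∀ P, E P ≠ 0 → HasOrderAt P H (A P)) : CayleyBacharach r E := by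
  rintro E' P rfl q hq
  exact mem_formsThrough_add_single.2
    ⟨hq, hG.mem_orderIdeal_succ hf hH (hHE P (by simp)) hq⟩

theorem CayleyBacharach.lt_degree (hE : CayleyBacharach r E) (hf : IsSmoothCurve d f)
    (hE0 : E ≠ 0) : r + 1 < E.degree := by
  by_contra! hdeg
  obtain ⟨P, hP⟩ := Finsupp.ne_iff.1 hE0
  obtain ⟨E', rfl⟩ := exists_eq_add_single hP
  rw [map_add, Finsupp.degree_single] at hdeg
  obtain ⟨q, hq, hqP⟩ := hf.exists_form_through P (Nat.le_of_succ_le_succ hdeg)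
  exact hqP.2 (mem_formsThrough_add_single.1 (hE E' P rfl hq)).2

-- If the line `L` through two points of `E` missed a point `P` of `E`, then `L` times a form
-- through the points of `E` off `L` other than `P` would contradict the Cayley–Bacharach
-- property.
theorem CayleyBacharach.exists_line (hE : CayleyBacharach r E) (hf : IsSmoothCurve d f)
    (hd : 1 < d) (hdeg : E.degree = r + 2) : ∃ L ∈ formsThrough 1 E, L ≠ 0 := by
  obtain ⟨S, hSE, hS⟩ := exists_le_degree_eq (show 2 ≤ E.degree by lia)
  obtain ⟨L, hL, hL0⟩ := Submodule.exists_mem_ne_zero_of_ne_bot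
    (Submodule.one_le_finrank_iff.1 (hf.finrank_formsThrough_one hS).ge)
  refine ⟨L, ?_, hL0⟩
  obtain ⟨B, hB⟩ := hf.exists_hasDivisor (mem_formsThrough.1 hL).1
    (not_dvd_of_isHomogeneous_of_lt hf.isHomogeneous (mem_formsThrough.1 hL).1 hL0 hd)
  rw [hB.mem_formsThrough_iff]
  by_contra hEB
  obtain ⟨P, hP⟩ := not_forall.1 hEB
  obtain ⟨U, hU⟩ := exists_add_of_le (inf_le_left : E ⊓ B ≤ E)
  have hPU : E P = min (E P) (B P) + U P := DFunLike.congr_fun hU P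
  obtain ⟨U', rfl⟩ := exists_eq_add_single (A := U) (a := P) (by lia)
  have hSdeg := Finsupp.degree_mono (le_inf hSE (hB.mem_formsThrough_iff.1 hL))
  have hdegU := congrArg Finsupp.degree hU
  rw [map_add, map_add, Finsupp.degree_single] at hdegU
  obtain ⟨s, rfl⟩ := Nat.exists_eq_add_of_le' (show 1 ≤ r by lia)
  obtain ⟨q, hq, hqP⟩ := hf.exists_form_through P (show U'.degree ≤ s by lia)
  have hqL : q * L ∈ formsThrough (s + 1) (E ⊓ B + U') := by
    rw [add_comm (E ⊓ B)]
    exact mul_mem_formsThrough hq (formsThrough_antitone 1 inf_le_right hB.mem_formsThrough)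
  have hmem := hE _ P (hU.trans (add_assoc _ _ _).symm) hqL
  have hord := hqP.mul (hB.hasOrderAt P) hf (mem_formsThrough.1 hq).1 hB.isHomogeneous
  have := hord.mem_orderIdeal_iff.1 ((mem_formsThrough.1 hmem).2 P)
  simp only [Finsupp.add_apply, Finsupp.single_eq_same] at hPU
  lia

end CayleyBacharach

/-! ### Pencils and nets of degree at most `d` -/

section Pencil

variable {k : Type*} [Field k] {f G H : MvPolynomial (Fin 3) k} {d m r : ℕ}
  {P : PlanePoint f} {A E : PlanePoint f →₀ ℕ}

theorem exists_not_dvd_sub_C_mul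
    (hdim : Module.finrank k (multiples f m) + 1 < Module.finrank k (formsThrough m A))
    (hG : G.IsHomogeneous m) : ∃ H ∈ formsThrough m A, ∀ c, ¬ f ∣ H - C c * G := by
  by_contra! hcon
  have hle : formsThrough m A ≤ multiples f m ⊔ Submodule.span k {G} := fun H hH ↦ by
    obtain ⟨c, hc⟩ := hcon H hH
    rw [← sub_add_cancel H (C c * G)]
    refine Submodule.add_mem_sup
      (mem_multiples.2 ⟨(mem_formsThrough.1 hH).1.sub (hG.C_mul c), hc⟩) ?_
    rw [← smul_eq_C_mul]
    exact Submodule.smul_mem _ _ (Submodule.mem_span_singleton_self G)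
  have := Submodule.finrank_mono hle
  have := Submodule.finrank_add_le_finrank_add_finrank (multiples f m) (Submodule.span k {G})
  have : Module.finrank k (Submodule.span k {G}) ≤ 1 := (finrank_span_le_card {G}).trans (by simp)
  lia

variable [IsAlgClosed k]

-- `Y` is the part of `E` through which `H` also passes; the rest `E'` of `E` then has the
-- Cayley–Bacharach property, so it has degree at least `r + 2` and `Y = 0`.
theorem HasDivisor.exists_line_of_not_dvd (hG : HasDivisor m G (A + E))
    (hf : IsSmoothCurve (r + 3) f) (hE : E.degree ≤ r + 2) (hH : H ∈ formsThrough m A)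
    (hGH : ∀ c, ¬ f ∣ H - C c * G) : E.degree = r + 2 ∧ ∃ L ∈ formsThrough 1 E, L ≠ 0 := by
  obtain ⟨X, hX⟩ := hf.exists_hasDivisor_add hH (by simpa using hGH 0)
  obtain ⟨E', hE'⟩ := exists_add_of_le (inf_le_left : E ⊓ X ≤ E)
  have hGY : HasDivisor m G (A + E ⊓ X + E') := by rwa [add_assoc, ← hE']
  have hHY : H ∈ formsThrough m (A + E ⊓ X) :=
    hX.mem_formsThrough_iff.2 (add_le_add_right inf_le_right A)
  have hCB : CayleyBacharach r E' := hGY.cayleyBacharach hf hHY fun P hP ↦ by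
    convert hX.hasOrderAt P using 1
    have hEP : E P = min (E P) (X P) + E' P := DFunLike.congr_fun hE' P
    simp only [Finsupp.add_apply, Finsupp.inf_apply]
    lia
  have hE'0 : E' ≠ 0 := by
    rintro rfl
    rw [add_zero] at hGY
    obtain ⟨c, hc, hdvd⟩ := hGY.exists_dvd_sub_mul (e := 0) (C := 0) hf
      (by rwa [zero_add, add_zero])
    obtain ⟨c, rfl⟩ := exists_C_eq (PlaneCurve.mem_formsThrough.1 hc).1
    exact hGH c hdvd
  have hlt := hCB.lt_degree hf hE'0
  have hdeg := congrArg Finsupp.degree hE'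
  rw [map_add] at hdeg
  obtain rfl : E = E' := by
    rwa [(Finsupp.degree_eq_zero_iff (E ⊓ X)).1 (by lia), zero_add] at hE'
  exact ⟨by lia, hCB.exists_line hf (by lia) (by lia)⟩

theorem HasDivisor.exists_line (hG : HasDivisor m G (A + E)) (hf : IsSmoothCurve (r + 3) f)
    (hE : E.degree ≤ r + 2)
    (hdim : Module.finrank k (multiples f m) + 1 < Module.finrank k (formsThrough m A)) :
    E.degree = r + 2 ∧ ∃ L ∈ formsThrough 1 E, L ≠ 0 :=
  have ⟨_, hH, hGH⟩ := exists_not_dvd_sub_C_mul hdim hG.isHomogeneous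
  hG.exists_line_of_not_dvd hf hE hH hGH

theorem IsSmoothCurve.finrank_formsThrough_le (hf : IsSmoothCurve (r + 3) f)
    (hA : (r + 3) * m ≤ A.degree + (r + 1)) :
    Module.finrank k (formsThrough m A) ≤ Module.finrank k (multiples f m) + 1 := by
  by_contra! hdim
  obtain ⟨G, hG, hfG⟩ := exists_not_dvd_sub_C_mul hdim (isHomogeneous_zero (Fin 3) k m)
  obtain ⟨E, hGE⟩ := hf.exists_hasDivisor_add hG (by simpa using hfG 0)
  have hdeg := hGE.degree_eq hf
  rw [map_add] at hdeg
  have := (hGE.exists_line hf (by lia) hdim).1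
  lia

theorem IsSmoothCurve.nonempty_planePoint (hf : IsSmoothCurve d f) (hd : 1 < d) :
    Nonempty (PlanePoint f) := by
  have hX := isHomogeneous_X k (0 : Fin 3)
  obtain ⟨B, hB⟩ := hf.exists_hasDivisor hX
    (not_dvd_of_isHomogeneous_of_lt hf.isHomogeneous hX (X_ne_zero 0) hd)
  have hB0 : B ≠ 0 := by
    rintro rfl
    have := hB.degree_eq hf
    rw [map_zero] at this
    lia
  exact ⟨(Finsupp.ne_iff.1 hB0).choose⟩

theorem IsSmoothCurve.finrank_formsThrough_le_add_three (hf : IsSmoothCurve (r + 3) f)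
    (hA : (r + 3) * m ≤ A.degree + (r + 3)) :
    Module.finrank k (formsThrough m A) ≤ Module.finrank k (multiples f m) + 3 := by
  obtain ⟨P⟩ := hf.nonempty_planePoint (by lia)
  have := hf.finrank_formsThrough_le_add_single m A P
  have := hf.finrank_formsThrough_le_add_single m (A + Finsupp.single P 1) P
  have := hf.finrank_formsThrough_le (m := m) (A := A + Finsupp.single P 1 + Finsupp.single P 1)
    (by simp only [map_add, Finsupp.degree_single]; lia)
  lia

-- Modulo `f`, the forms through `A + P` have dimension at least two and those through `A + 2 P` at
-- most one, so some form through `A + P` meets the curve at `P` no further.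
theorem IsSmoothCurve.exists_hasDivisor_residual (hf : IsSmoothCurve (r + 3) f)
    (hA : A.degree + (r + 3) = (r + 3) * m)
    (hdim : Module.finrank k (multiples f m) + 3 ≤ Module.finrank k (formsThrough m A))
    (P : PlanePoint f) :
    ∃ G E, HasDivisor m G (A + Finsupp.single P 1 + E) ∧ E P = 0 ∧ E.degree = r + 2 := by
  have := hf.finrank_formsThrough_le_add_single m A P
  have := hf.finrank_formsThrough_le (m := m) (A := A + Finsupp.single P 1 + Finsupp.single P 1)
    (by simp only [map_add, Finsupp.degree_single]; lia)
  obtain ⟨G, hG, hGP⟩ : ∃ G ∈ formsThrough m (A + Finsupp.single P 1),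
      G ∉ formsThrough m (A + Finsupp.single P 1 + Finsupp.single P 1) :=
    SetLike.not_le_iff_exists.1 fun hle ↦ by
      have := Submodule.finrank_mono hle
      lia
  obtain ⟨E, hGE⟩ := hf.exists_hasDivisor_add hG fun hdvd ↦
    hGP (multiples_le_formsThrough (mem_multiples.2 ⟨(mem_formsThrough.1 hG).1, hdvd⟩))
  refine ⟨G, E, hGE, ?_, ?_⟩
  · by_contra hEP
    refine hGP (hGE.mem_formsThrough_iff.2 (add_le_add_right ?_ _))
    exact Finsupp.single_le_iff.2 (Nat.one_le_iff_ne_zero.2 hEP)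
  · have hdeg := hGE.degree_eq hf
    rw [map_add, map_add, Finsupp.degree_single] at hdeg
    lia

-- The line through the residual divisor `T + P'` also contains `P`, because `T + P` is the residual
-- divisor of the same form with respect to `A + P'` and `T` determines the line.
theorem IsSmoothCurve.exists_line_residual (hf : IsSmoothCurve (r + 3) f) (hr : 1 ≤ r)
    (hA : A.degree + (r + 3) = (r + 3) * m)
    (hdim : Module.finrank k (multiples f m) + 3 ≤ Module.finrank k (formsThrough m A)) :
    ∃ L G B, HasDivisor 1 L B ∧ HasDivisor m G (A + B) := by
  obtain ⟨P⟩ := hf.nonempty_planePoint (by lia)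
  obtain ⟨G, E, hGE, hEP, hE⟩ := hf.exists_hasDivisor_residual hA hdim P
  have hdimP (Q : PlanePoint f) : Module.finrank k (multiples f m) + 1 <
      Module.finrank k (formsThrough m (A + Finsupp.single Q 1)) := by
    have := hf.finrank_formsThrough_le_add_single m A Q
    lia
  obtain ⟨-, L, hL, hL0⟩ := hGE.exists_line hf hE.le (hdimP P)
  obtain ⟨P', hP'⟩ := Finsupp.ne_iff.1 (show E ≠ 0 by rintro rfl; simp at hE)
  obtain ⟨T, rfl⟩ := exists_eq_add_single hP'
  rw [map_add, Finsupp.degree_single] at hE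
  have hGT : HasDivisor m G (A + Finsupp.single P' 1 + (T + Finsupp.single P 1)) := by
    convert hGE using 1
    abel
  obtain ⟨-, L', hL', hL'0⟩ := hGT.exists_line hf
    (by rw [map_add, Finsupp.degree_single]; lia) (hdimP P')
  have hLT : L ∈ formsThrough 1 (T + Finsupp.single P 1) :=
    hf.formsThrough_one_le (by lia) le_self_add hL' hL'0 (formsThrough_antitone 1 le_self_add hL)
  have hLB : L ∈ formsThrough 1 (T + Finsupp.single P' 1 + Finsupp.single P 1) := by
    refine mem_formsThrough_add_single.2 ⟨hL, ?_⟩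
    rw [hEP]
    exact orderIdeal_antitone (by simp) ((mem_formsThrough.1 hLT).2 P)
  obtain ⟨X, hLX⟩ := hf.exists_hasDivisor_add hLB (not_dvd_of_isHomogeneous_of_lt
    hf.isHomogeneous (mem_formsThrough.1 hL).1 hL0 (by lia))
  have hdeg := hLX.degree_eq hf
  simp only [map_add, Finsupp.degree_single] at hdeg
  rw [(Finsupp.degree_eq_zero_iff X).1 (by lia), add_zero] at hLX
  refine ⟨L, G, _, hLX, ?_⟩
  convert hGE using 1
  abel

end Pencil

/-! ### Riemann–Roch spaces -/

section RiemannRoch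

variable {k : Type*} [Field k] {f g G : MvPolynomial (Fin 3) k} {d m : ℕ}

theorem isSmoothCurve_of_isFractionRing (hf : f.IsHomogeneous d)
    (hsmooth : ∀ v : Fin 3 → k, eval v f = 0 → (∀ i, eval v (pderiv i f) = 0) → v = 0)
    (F : Type*) [Field F] [Algebra (MvPolynomial (Fin 3) k ⧸ Ideal.span {f}) F]
    [IsFractionRing (MvPolynomial (Fin 3) k ⧸ Ideal.span {f}) F] : IsSmoothCurve d f where
  isHomogeneous := hf
  prime := by
    have hf0 : f ≠ 0 := by
      rintro rfl
      simpa using congrFun (hsmooth 1 (by simp) (by simp)) 0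
    have hdom : IsDomain (MvPolynomial (Fin 3) k ⧸ Ideal.span {f}) :=
      (IsFractionRing.injective _ F).isDomain (algebraMap _ F)
    exact (Ideal.span_singleton_prime hf0).1 ((Ideal.Quotient.isDomain_iff_prime _).1 hdom)
  smooth := hsmooth

theorem exists_eq_sub_degree {α : Type*} (D : α →₀ ℤ) : ∃ A N : α →₀ ℕ,
    (∀ a, D a = A a - N a) ∧ D.sum (fun _ n ↦ n) = A.degree - N.degree := by
  classical
  induction D using Finsupp.induction_linear with
  | zero => exact ⟨0, 0, by simp, by simp⟩
  | add D D' hD hD' =>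
    obtain ⟨A, N, hAN, hdeg⟩ := hD
    obtain ⟨A', N', hAN', hdeg'⟩ := hD'
    refine ⟨A + A', N + N', fun a ↦ ?_, ?_⟩
    · simp only [Finsupp.add_apply, hAN, hAN']
      lia
    · rw [Finsupp.sum_add_index' (fun _ ↦ rfl) (fun _ _ _ ↦ rfl), hdeg, hdeg', map_add, map_add]
      lia
  | single a n =>
    refine ⟨Finsupp.single a n.toNat, Finsupp.single a (-n).toNat, fun b ↦ ?_, ?_⟩
    · simp only [Finsupp.single_apply]
      split_ifs <;> lia
    · rw [Finsupp.sum_single_index rfl, Finsupp.degree_single, Finsupp.degree_single]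
      lia

theorem IsSmoothCurve.exists_hasDivisor_eq_add [IsAlgClosed k] (hf : IsSmoothCurve d f)
    (hd : 1 < d) (D : PlanePoint f →₀ ℤ) :
    ∃ (m : ℕ) (G : MvPolynomial (Fin 3) k) (A B : PlanePoint f →₀ ℕ), HasDivisor m G B ∧
      (∀ P, (B P : ℤ) = A P + D P) ∧ (A.degree + D.sum (fun _ n ↦ n) : ℤ) = d * m := by
  obtain ⟨P⟩ := hf.nonempty_planePoint hd
  obtain ⟨A, N, hAN, hdeg⟩ := exists_eq_sub_degree D
  obtain ⟨G, hG, hGP⟩ := hf.exists_form_through P (le_refl A.degree)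
  obtain ⟨E, hGE⟩ := hf.exists_hasDivisor_add hG fun hdvd ↦
    hGP.2 (Ideal.mem_of_dvd _ hdvd self_mem_orderIdeal)
  refine ⟨A.degree, G, E + N, A + E, hGE, fun P ↦ ?_, ?_⟩
  · simp only [Finsupp.add_apply, hAN]
    lia
  · have := hGE.degree_eq hf
    rw [map_add] at this ⊢
    rw [hdeg, Nat.cast_add]
    zify at this
    linarith

variable (f) (F : Type*) [Field F] [Algebra (MvPolynomial (Fin 3) k ⧸ Ideal.span {f}) F]
  [Algebra k F] [IsScalarTower k (MvPolynomial (Fin 3) k ⧸ Ideal.span {f}) F]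

/-- Restriction of polynomials to the curve, with values in the field `F` of fractions of its
homogeneous coordinate ring. -/
noncomputable def restrict : MvPolynomial (Fin 3) k →ₐ[k] F :=
  (IsScalarTower.toAlgHom k (MvPolynomial (Fin 3) k ⧸ Ideal.span {f}) F).comp
    (Ideal.Quotient.mkₐ k (Ideal.span {f}))

/-- Division of forms by `G`, with values in `F`. -/
noncomputable def divBy (G : MvPolynomial (Fin 3) k) : MvPolynomial (Fin 3) k →ₗ[k] F :=
  LinearMap.mulRight k (restrict f F G)⁻¹ ∘ₗ (restrict f F).toLinearMap

variable {f F}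

theorem divBy_apply : divBy f F G g = restrict f F g / restrict f F G :=
  (div_eq_mul_inv _ _).symm

variable [IsFractionRing (MvPolynomial (Fin 3) k ⧸ Ideal.span {f}) F]

theorem restrict_eq_zero_iff : restrict f F g = 0 ↔ f ∣ g := by
  change algebraMap _ F (Ideal.Quotient.mk (Ideal.span {f}) g) = 0 ↔ _
  rw [map_eq_zero_iff _ (IsFractionRing.injective _ F), Ideal.Quotient.eq_zero_iff_mem,
    Ideal.mem_span_singleton]

theorem ker_divBy (hfG : ¬ f ∣ G) :
    LinearMap.ker (divBy f F G) = (Ideal.span {f}).restrictScalars k := by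
  ext g
  simp [divBy_apply, restrict_eq_zero_iff, hfG, Ideal.mem_span_singleton]

variable {A B : PlanePoint f →₀ ℕ} {D : PlanePoint f → ℤ}

theorem HasDivisor.divBy_mem_RRspace (hG : HasDivisor m G B) (hf : IsSmoothCurve d f)
    (hD : ∀ P, (B P : ℤ) = A P + D P) (hg : g ∈ formsThrough m A) :
    divBy f F G g ∈ RRspace F f D := by
  have hG0 := mt (restrict_eq_zero_iff (F := F)).1 hG.not_dvd
  by_cases hfg : f ∣ g
  · left
    rw [divBy_apply, restrict_eq_zero_iff.2 hfg, zero_div]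
  · obtain ⟨X, hX⟩ := hf.exists_hasDivisor_add hg hfg
    refine Or.inr ⟨m, g, G, hX.isHomogeneous, hG.isHomogeneous, hfg, hG.not_dvd,
      (congrArg (· * _) divBy_apply).trans (div_mul_cancel₀ _ hG0), fun P ↦ ?_⟩
    rw [(hX.hasOrderAt P).ordAt_eq, (hG.hasOrderAt P).ordAt_eq, hD P, Finsupp.add_apply]
    lia

-- If `φ = g / h`, then `g * G` passes through the divisor of `h`, so Noether's theorem writes it as
-- `c * h` modulo `f`, and `φ = c / G`.
theorem HasDivisor.exists_divBy_eq [IsAlgClosed k] (hG : HasDivisor m G B)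
    (hf : IsSmoothCurve d f) (hD : ∀ P, (B P : ℤ) = A P + D P) {φ : F} (hφ : φ ∈ RRspace F f D) :
    ∃ c ∈ formsThrough m A, divBy f F G c = φ := by
  obtain rfl | ⟨e, g, h, hg, hh, hfg, hfh, hgh, hord⟩ := hφ
  · exact ⟨0, zero_mem _, map_zero _⟩
  obtain ⟨X, hX⟩ := hf.exists_hasDivisor hg hfg
  obtain ⟨Y, hY⟩ := hf.exists_hasDivisor hh hfh
  have hle : Y + A ≤ X + B := fun P ↦ by
    have := hord P
    rw [(hX.hasOrderAt P).ordAt_eq, (hY.hasOrderAt P).ordAt_eq] at this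
    have := hD P
    simp only [Finsupp.add_apply]
    lia
  have hgG : g * G ∈ formsThrough (m + e) (Y + A) :=
    add_comm e m ▸ (hX.mul hG hf).mem_formsThrough_iff.2 hle
  obtain ⟨c, hc, hdvd⟩ := hY.exists_dvd_sub_mul hf hgG
  refine ⟨c, hc, ?_⟩
  have hG0 := mt (restrict_eq_zero_iff (F := F)).1 hG.not_dvd
  have hh0 := mt (restrict_eq_zero_iff (F := F)).1 hfh
  have hφh : φ * restrict f F h = restrict f F g := hgh
  have hch := restrict_eq_zero_iff (F := F).2 hdvd
  rw [map_sub, map_mul, map_mul, sub_eq_zero, ← hφh] at hch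
  rw [divBy_apply, div_eq_iff hG0]
  refine mul_right_cancel₀ hh0 ?_
  rw [← hch]
  ring

theorem HasDivisor.h0_add_finrank_multiples [IsAlgClosed k] (hG : HasDivisor m G B)
    (hf : IsSmoothCurve d f) (hD : ∀ P, (B P : ℤ) = A P + D P) :
    h0 F f D + Module.finrank k (multiples f m) = Module.finrank k (formsThrough m A) := by
  have hRR : RRspace F f D = (formsThrough m A).map (divBy f F G) :=
    Set.Subset.antisymm (fun _ hφ ↦ hG.exists_divBy_eq hf hD hφ)
      (Set.image_subset_iff.2 fun _ hg ↦ hG.divBy_mem_RRspace hf hD hg)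
  have hker : LinearMap.ker ((divBy f F G).domRestrict (formsThrough m A)) =
      (multiples f m).submoduleOf (formsThrough m A) := by
    ext g
    have hg := (PlaneCurve.mem_formsThrough.1 g.2).1
    simp [Submodule.submoduleOf, LinearMap.ker_domRestrict, ker_divBy hG.not_dvd,
      mem_multiples, hg, Ideal.mem_span_singleton]
  rw [h0, hRR, Submodule.span_eq, ← LinearMap.range_domRestrict,
    ← LinearMap.finrank_range_add_finrank_ker ((divBy f F G).domRestrict (formsThrough m A)), hker,
    (Submodule.submoduleOfEquivOfLe multiples_le_formsThrough).finrank_eq]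

end RiemannRoch

end PlaneCurve

/-- A smooth plane curve `C ⊆ ℙ²_k` of degree `d ≥ 4` over an algebraically closed field has
at most one `g²_d`, which is the complete linear series of the plane embedding: every divisor
`D` of degree `d` with `ℓ(D) ≥ 3` satisfies `ℓ(D) = 3` and is linearly equivalent to the
intersection divisor of `C` with a line (i.e. the corresponding line bundle is `O_C(1)`). -/
theorem unique_g2d
    (k : Type*) [Field k] [IsAlgClosed k]
    (d : ℕ) (hd : 4 ≤ d) (f : MvPolynomial (Fin 3) k) (hf : f.IsHomogeneous d)
    (hsm : ∀ v : Fin 3 → k, MvPolynomial.eval v f = 0 →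
      (∀ i : Fin 3, MvPolynomial.eval v (MvPolynomial.pderiv i f) = 0) → v = 0)
    (F : Type*) [Field F]
    [Algebra (MvPolynomial (Fin 3) k ⧸ Ideal.span {f}) F]
    [IsFractionRing (MvPolynomial (Fin 3) k ⧸ Ideal.span {f}) F]
    [Algebra k F] [IsScalarTower k (MvPolynomial (Fin 3) k ⧸ Ideal.span {f}) F]
    (D : PlanePoint f →₀ ℤ) (hdeg : D.sum (fun _ n => n) = (d : ℤ))
    (h3 : 3 ≤ h0 F f (fun q => D q)) :
    h0 F f (fun q => D q) = 3 ∧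
    ∃ (l g h : MvPolynomial (Fin 3) k) (e : ℕ),
      l.IsHomogeneous 1 ∧ l ≠ 0 ∧
      g.IsHomogeneous e ∧ h.IsHomogeneous e ∧ ¬ f ∣ g ∧ ¬ f ∣ h ∧
      ∀ q : PlanePoint f,
        (D q : ℤ) - (ordAt f q l : ℤ) = (ordAt f q g : ℤ) - (ordAt f q h : ℤ) := by
  obtain ⟨r, rfl⟩ := Nat.exists_eq_add_of_le' (show 3 ≤ d by lia)
  have hC : PlaneCurve.IsSmoothCurve (r + 3) f :=
    PlaneCurve.isSmoothCurve_of_isFractionRing hf hsm F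
  obtain ⟨m, G₀, A, B₀, hG₀, hD, hA⟩ := hC.exists_hasDivisor_eq_add (by lia) D
  replace hA : A.degree + (r + 3) = (r + 3) * m := by
    rw [hdeg] at hA
    exact_mod_cast hA
  have hdim := hG₀.h0_add_finrank_multiples (F := F) hC hD
  refine ⟨h3.antisymm' ?_, ?_⟩
  · have := hC.finrank_formsThrough_le_add_three hA.ge
    lia
  obtain ⟨L, G, B, hL, hG⟩ := hC.exists_line_residual (by lia) hA (by lia)
  refine ⟨L, G₀, G, m, hL.isHomogeneous, fun h ↦ hL.not_dvd (h ▸ dvd_zero f), hG₀.isHomogeneous,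
    hG.isHomogeneous, hG₀.not_dvd, hG.not_dvd, fun q ↦ ?_⟩
  rw [(hL.hasOrderAt q).ordAt_eq, (hG₀.hasOrderAt q).ordAt_eq, (hG.hasOrderAt q).ordAt_eq, hD q,
    Finsupp.add_apply]
  lia
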